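/- arXiv:2511.11813 — 2 statements merged into one kernel-verified Lean document; each statement's English description precedes it below -/
import Mathlib

section
/- Suppose xI − X − Z is invertible for every real x, and suppose there exist complex numbers c_0, …, c_N such that det(wI−X)·det(zI−Z) + aᵀ·adj(wI−X)·adj(zI−Z)·b = Σ_{k=0}^{N} c_k·(wz)^k for all complex w, z (i.e., the doubly-normalized wave function at second time 0 depends on w and z only through the product wz). Define f̂_m(x) = (1/m!) times the m-th derivative at w = 0 of w ↦ exp(xw − w²/2)·(det(wI−X) + aᵀ·adj(wI−X)·(xI−X−Z)⁻¹·b), and ĝ_n(x) = (1/n!) times the n-th derivative at z = 0 of z ↦ exp(xz − z²/2)·(det(zI−Z) + aᵀ·(xI−X−Z)⁻¹·adj(zI−Z)·b). Then for all natural numbers m ≠ n, ∫_{-∞}^{∞} f̂_m(x)·ĝ_n(x)·exp(−x²/2) dx = 0; i.e., the generated sequences are bi-orthogonal with respect to the Hermite product. -/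
/-!
Write `M = x I - X - Z`. The generating functions of the two sequences, multiplied together with the
weight, give
`exp (-(x - w - z)² / 2 + w z) * (det (w I - X) + aᵀ adj (w I - X) M⁻¹ b)
  * (det (z I - Z) + aᵀ M⁻¹ adj (z I - Z) b)`.
The rank-one condition and `[X, Z] = M X - X M` give `M⁻¹ b aᵀ M⁻¹ = X M⁻¹ - M⁻¹ X - M⁻²`, where
`-M⁻²` is the `x`-derivative of `M⁻¹`. Hence the product of the two brackets is
`D(w, z) + (w + z - x) H + ∂ₓ H`, where `H = aᵀ adj (w I - X) M⁻¹ adj (z I - Z) b` and `D` is the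
doubly-normalized wave function at second time `0`. The terms in `H` form an exact derivative
once the exponential is included, and `D` depends only on `w z`, so that integrating over `x` leaves
a function of `w z` alone, which has no `wᵐ zⁿ` coefficient for `m ≠ n`.

The formal proof works with the coefficient of `wᵐ zⁿ` throughout, so that no integral has to be
interchanged with a derivative. The Taylor coefficients become finite sums (`taylor_wave`) built
from normalised Hermite polynomials and the matrix coefficients of the adjugate.
`bilinear_identity` is the displayed identity at the level of coefficients,
`integral_gaussian_exact` disposes of the exact part, and the rest vanishes by
`coeff_of_product_dependence` and the orthogonality of the Hermite polynomials
(`integral_normHermite_mul`). Integrability holds because every function involved is continuous and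
grows more slowly than any Gaussian (`SlowGrowth`); for the entries of `M⁻¹` this is
`slowGrowth_inv_apply`, which uses that the resolvent of `X + Z` tends to zero at infinity.
-/

open Matrix MeasureTheory

section Auxiliary

open scoped Polynomial

/-! ### Normalised Hermite polynomials -/

lemma derivative_hermite_succ (n : ℕ) :
    Polynomial.derivative (Polynomial.hermite (n + 1)) = ((n : ℤ[X]) + 1) * Polynomial.hermite n := by
  induction n with
  | zero => simp
  | succ n ih =>
    have h : Polynomial.derivative (Polynomial.hermite (n + 2)) = Polynomial.hermite (n + 1)
        + Polynomial.X * Polynomial.derivative (Polynomial.hermite (n + 1))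
        - Polynomial.derivative (Polynomial.derivative (Polynomial.hermite (n + 1))) := by
      rw [Polynomial.hermite_succ (n + 1)]
      simp
    rw [h, ih, Polynomial.derivative_mul, Polynomial.hermite_succ n]
    simp
    ring

/-- The polynomial `Heₖ / k!`, where `Heₖ` is the probabilists' Hermite polynomial: the coefficient
of `wᵏ` in `exp (x w - w² / 2)`. -/
noncomputable def normHermite (k : ℕ) : ℂ[X] :=
  Polynomial.C (1 / (k.factorial : ℂ)) * (Polynomial.hermite k).map (Int.castRingHom ℂ)

lemma normHermite_zero : normHermite 0 = 1 := by
  simp [normHermite]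

lemma derivative_normHermite_zero : Polynomial.derivative (normHermite 0) = 0 := by
  simp [normHermite_zero]

/-- The normalised Hermite polynomials form an Appell sequence: `∂ₓ` acts on the generating
function `exp (x w - w² / 2)` as multiplication by `w`. -/
lemma derivative_normHermite_succ (k : ℕ) :
    Polynomial.derivative (normHermite (k + 1)) = normHermite k := by
  have hk : (k.factorial : ℂ) ≠ 0 := by exact_mod_cast k.factorial_ne_zero
  have hk' : ((k : ℂ) + 1) ≠ 0 := by exact_mod_cast k.succ_ne_zero
  have h : Polynomial.C (1 / ((k + 1).factorial : ℂ)) * ((k : ℂ[X]) + 1)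
      = Polynomial.C (1 / (k.factorial : ℂ)) := by
    rw [← Polynomial.C_eq_natCast, ← Polynomial.C_1, ← Polynomial.C_add, ← Polynomial.C_mul]
    congr 1
    push_cast [Nat.factorial_succ]
    field_simp
  rw [normHermite, Polynomial.derivative_C_mul, Polynomial.derivative_map,
    derivative_hermite_succ, normHermite, ← h]
  simp [mul_assoc]

lemma normHermite_succ (k : ℕ) :
    ((k : ℂ[X]) + 1) * normHermite (k + 1)
      = Polynomial.X * normHermite k - Polynomial.derivative (normHermite k) := by
  have hk : (k.factorial : ℂ) ≠ 0 := by exact_mod_cast k.factorial_ne_zero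
  have hk' : ((k : ℂ) + 1) ≠ 0 := by exact_mod_cast k.succ_ne_zero
  have h : ((k : ℂ[X]) + 1) * Polynomial.C (1 / ((k + 1).factorial : ℂ))
      = Polynomial.C (1 / (k.factorial : ℂ)) := by
    rw [← Polynomial.C_eq_natCast, ← Polynomial.C_1, ← Polynomial.C_add, ← Polynomial.C_mul]
    congr 1
    push_cast [Nat.factorial_succ]
    field_simp
  rw [normHermite, ← mul_assoc, h, normHermite, Polynomial.derivative_C_mul,
    Polynomial.derivative_map, Polynomial.hermite_succ]
  simp
  ring

/-- The `k`-th derivative of the Hermite generating function, at an arbitrary point. -/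
lemma iteratedDeriv_generating (x : ℂ) (k : ℕ) :
    iteratedDeriv k (fun w : ℂ => Complex.exp (x * w - w ^ 2 / 2))
      = fun w => (k.factorial : ℂ) * (normHermite k).eval (x - w)
          * Complex.exp (x * w - w ^ 2 / 2) := by
  induction k with
  | zero => simp [normHermite_zero]
  | succ k ih =>
    rw [iteratedDeriv_succ, ih]
    funext w
    have h1 : HasDerivAt (fun w : ℂ => x * w - w ^ 2 / 2) (x - w) w :=
      (((hasDerivAt_id w).const_mul x).sub (((hasDerivAt_id w).pow 2).div_const 2)).congr_deriv
        (by simp)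
    have h2 : HasDerivAt (fun w : ℂ => (normHermite k).eval (x - w))
        ((Polynomial.derivative (normHermite k)).eval (x - w) * (-1)) w :=
      ((normHermite k).hasDerivAt (x - w)).comp w ((hasDerivAt_id w).const_sub x)
    have h3 := congrArg (Polynomial.eval (x - w)) (normHermite_succ k)
    simp only [Polynomial.eval_mul, Polynomial.eval_add, Polynomial.eval_natCast,
      Polynomial.eval_one, Polynomial.eval_sub, Polynomial.eval_X] at h3
    refine ((h2.const_mul (k.factorial : ℂ)).mul h1.cexp).deriv.trans ?_
    rw [Nat.factorial_succ]
    push_cast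
    linear_combination (-(k.factorial : ℂ)) * Complex.exp (x * w - w ^ 2 / 2) * h3

lemma iteratedDeriv_polynomial_zero (p : ℂ[X]) (k : ℕ) :
    iteratedDeriv k (fun w : ℂ => p.eval w) 0 = (k.factorial : ℂ) * p.coeff k := by
  have h : ∀ k : ℕ, iteratedDeriv k (fun w : ℂ => p.eval w)
      = fun w => (Polynomial.derivative^[k] p).eval w := by
    intro k
    induction k with
    | zero => simp
    | succ k ih =>
      rw [iteratedDeriv_succ, ih]
      funext w
      rw [Polynomial.deriv, Function.iterate_succ_apply']
  rw [h]
  beta_reduce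
  rw [← Polynomial.coeff_zero_eq_eval_zero, Polynomial.coeff_iterate_derivative]
  simp [Nat.descFactorial_self]

/-- Taylor coefficients at `w = 0` of `exp (x w - w² / 2)` times a polynomial in `w`. -/
lemma taylor_generating_mul_polynomial (x : ℂ) (p : ℂ[X]) (m : ℕ) :
    (1 / (m.factorial : ℂ)) *
        iteratedDeriv m (fun w : ℂ => Complex.exp (x * w - w ^ 2 / 2) * p.eval w) 0
      = ∑ i ∈ Finset.range (m + 1), (normHermite (m - i)).eval x * p.coeff i := by
  rw [iteratedDeriv_fun_mul (by fun_prop)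
    (by simpa using (p.contDiff_aeval (𝕜 := ℂ) m).contDiffAt), ← Finset.sum_range_reflect,
    Finset.mul_sum]
  refine Finset.sum_congr rfl fun i hi => ?_
  have hi' : i ≤ m := by simpa [Nat.lt_succ_iff] using hi
  have e1 : m + 1 - 1 - i = m - i := by omega
  have e2 : m - (m - i) = i := by omega
  have hm : (m.factorial : ℂ) ≠ 0 := by exact_mod_cast m.factorial_ne_zero
  have hch : (m.choose i : ℂ) * i.factorial * (m - i).factorial = m.factorial := by
    exact_mod_cast Nat.choose_mul_factorial_mul_factorial hi'
  rw [e1, e2, iteratedDeriv_generating, iteratedDeriv_polynomial_zero, Nat.choose_symm hi']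
  simp only [mul_zero, sub_zero, zero_pow two_ne_zero, zero_div, Complex.exp_zero, mul_one]
  rw [one_div_mul_eq_div, div_eq_iff hm, ← hch]
  ring

/-! ### Functions growing more slowly than every Gaussian -/

/-- A continuous function on `ℝ` which is `O(exp (ε x²))` for every `ε > 0`. -/
def SlowGrowth (F : ℝ → ℂ) : Prop :=
  Continuous F ∧ ∀ ε : ℝ, 0 < ε → ∃ C : ℝ, 0 ≤ C ∧ ∀ x, ‖F x‖ ≤ C * Real.exp (ε * x ^ 2)

namespace SlowGrowth

lemma of_bounded {F : ℝ → ℂ} (hF : Continuous F) {C : ℝ} (hC : ∀ x, ‖F x‖ ≤ C) :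
    SlowGrowth F := by
  have hC0 : 0 ≤ C := (norm_nonneg _).trans (hC 0)
  refine ⟨hF, fun ε hε => ⟨C, hC0, fun x => (hC x).trans ?_⟩⟩
  exact le_mul_of_one_le_right hC0 (Real.one_le_exp (by positivity))

lemma const (c : ℂ) : SlowGrowth fun _ => c :=
  of_bounded continuous_const (C := ‖c‖) fun _ => le_rfl

lemma add {F G : ℝ → ℂ} (hF : SlowGrowth F) (hG : SlowGrowth G) :
    SlowGrowth fun x => F x + G x := by
  refine ⟨hF.1.add hG.1, fun ε hε => ?_⟩
  obtain ⟨C, hC, h⟩ := hF.2 ε hε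
  obtain ⟨D, hD, h'⟩ := hG.2 ε hε
  refine ⟨C + D, by positivity, fun x => (norm_add_le _ _).trans ?_⟩
  linarith [h x, h' x]

lemma mul {F G : ℝ → ℂ} (hF : SlowGrowth F) (hG : SlowGrowth G) :
    SlowGrowth fun x => F x * G x := by
  refine ⟨hF.1.mul hG.1, fun ε hε => ?_⟩
  obtain ⟨C, hC, h⟩ := hF.2 (ε / 2) (by positivity)
  obtain ⟨D, hD, h'⟩ := hG.2 (ε / 2) (by positivity)
  refine ⟨C * D, by positivity, fun x => ?_⟩
  have he : Real.exp (ε * x ^ 2) = Real.exp (ε / 2 * x ^ 2) * Real.exp (ε / 2 * x ^ 2) := by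
    rw [← Real.exp_add]; ring_nf
  rw [norm_mul, he, mul_mul_mul_comm]
  exact mul_le_mul (h x) (h' x) (norm_nonneg _) (by positivity)

lemma sub {F G : ℝ → ℂ} (hF : SlowGrowth F) (hG : SlowGrowth G) :
    SlowGrowth fun x => F x - G x := by
  simpa [sub_eq_add_neg] using hF.add ((const (-1)).mul hG)

lemma sum {ι : Type*} (s : Finset ι) {F : ι → ℝ → ℂ} (hF : ∀ i ∈ s, SlowGrowth (F i)) :
    SlowGrowth fun x => ∑ i ∈ s, F i x := by
  classical
  induction s using Finset.induction_on with
  | empty => simpa using const 0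
  | insert i s hi ih =>
    simp only [Finset.sum_insert hi]
    exact (hF i (by simp)).add (ih fun j hj => hF j (by simp [hj]))

lemma id : SlowGrowth fun x => (x : ℂ) := by
  refine ⟨Complex.continuous_ofReal, fun ε hε => ⟨1 / (4 * ε) + 1, by positivity, fun x => ?_⟩⟩
  rw [Complex.norm_real, Real.norm_eq_abs]
  -- completing the square: `(2 ε |x| - 1)² ≥ 0`
  have h1 : |x| ≤ 1 / (4 * ε) + ε * x ^ 2 := by
    have h : 1 / (4 * ε) + ε * x ^ 2 - |x| = (2 * ε * |x| - 1) ^ 2 / (4 * ε) := by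
      rw [← sq_abs x]; field_simp; ring
    have : 0 ≤ (2 * ε * |x| - 1) ^ 2 / (4 * ε) := by positivity
    linarith
  have h2 := Real.add_one_le_exp (ε * x ^ 2)
  have h3 : 0 ≤ 1 / (4 * ε) := by positivity
  have h4 : 0 ≤ ε * x ^ 2 := by positivity
  nlinarith

lemma polynomial (p : ℂ[X]) : SlowGrowth fun x => p.eval (x : ℂ) := by
  induction p using Polynomial.induction_on' with
  | add p q hp hq => simpa using hp.add hq
  | monomial n c =>
    induction n with
    | zero => simpa using const c
    | succ n ih =>
      simp only [Polynomial.eval_monomial] at ih ⊢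
      simpa [pow_succ, mul_assoc] using ih.mul id

lemma integrable {F : ℝ → ℂ} (hF : SlowGrowth F) :
    Integrable fun x : ℝ => F x * Complex.exp (-(x : ℂ) ^ 2 / 2) := by
  obtain ⟨C, hC, h⟩ := hF.2 (1 / 4) (by norm_num)
  have hc : Continuous fun x : ℝ => F x * Complex.exp (-(x : ℂ) ^ 2 / 2) :=
    hF.1.mul (by fun_prop)
  refine ((integrable_exp_neg_mul_sq (b := 1 / 4) (by norm_num)).const_mul C).mono'
    hc.aestronglyMeasurable (Filter.Eventually.of_forall fun x => ?_)
  have hn : ‖Complex.exp (-(x : ℂ) ^ 2 / 2)‖ = Real.exp (-x ^ 2 / 2) := by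
    rw [Complex.norm_exp]
    congr 1
    have : (-(x : ℂ) ^ 2 / 2) = ((-x ^ 2 / 2 : ℝ) : ℂ) := by push_cast; ring
    rw [this, Complex.ofReal_re]
  have he : Real.exp (-(1 / 4) * x ^ 2) = Real.exp (1 / 4 * x ^ 2) * Real.exp (-x ^ 2 / 2) := by
    rw [← Real.exp_add]; ring_nf
  rw [norm_mul, hn, he, ← mul_assoc]
  exact mul_le_mul_of_nonneg_right (h x) (Real.exp_pos _).le

end SlowGrowth

/-- Against the Gaussian weight, `u' - x u` integrates to zero: it is the derivative of
`u exp (-x² / 2)` divided by the weight. -/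
lemma integral_gaussian_exact {u v : ℝ → ℂ} (hu : SlowGrowth u)
    (hv : SlowGrowth v) (hd : ∀ x, HasDerivAt u (v x) x) :
    ∫ x : ℝ, (v x - x * u x) * Complex.exp (-(x : ℂ) ^ 2 / 2) = 0 := by
  refine integral_eq_zero_of_hasDerivAt_of_integrable
    (f := fun x : ℝ => u x * Complex.exp (-(x : ℂ) ^ 2 / 2)) (fun x => ?_)
    (hv.sub (SlowGrowth.id.mul hu)).integrable hu.integrable
  have h1 : HasDerivAt (fun x : ℝ => -(x : ℂ) ^ 2 / 2) (-(x : ℂ)) x := by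
    have h := (((hasDerivAt_id (x : ℂ)).pow 2).neg.div_const 2).comp_ofReal
    exact h.congr_deriv (by simp; ring)
  exact ((hd x).mul h1.cexp).congr_deriv (by ring)

/-- Orthogonality of the Hermite polynomials. Integrating the derivative of
`normHermite i * normHermite j * exp (-x² / 2)` gives a recursion lowering both indices. -/
lemma integral_normHermite_mul {i j : ℕ} (hij : i ≠ j) :
    ∫ x : ℝ, ((normHermite i).eval (x : ℂ) * (normHermite j).eval (x : ℂ))
      * Complex.exp (-(x : ℂ) ^ 2 / 2) = 0 := by
  have key : ∀ i j : ℕ, ∫ x : ℝ, (-((i : ℂ) + 1) * ((normHermite (i + 1)).eval (x : ℂ)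
        * (normHermite j).eval (x : ℂ)) + (normHermite i).eval (x : ℂ)
        * (Polynomial.derivative (normHermite j)).eval (x : ℂ))
      * Complex.exp (-(x : ℂ) ^ 2 / 2) = 0 := by
    intro i j
    rw [← integral_gaussian_exact (SlowGrowth.polynomial (normHermite i * normHermite j))
      (SlowGrowth.polynomial (Polynomial.derivative (normHermite i * normHermite j)))
      fun x => (Polynomial.hasDerivAt _ _).comp_ofReal]
    refine integral_congr_ae (Filter.Eventually.of_forall fun x => ?_)
    have h3 := congrArg (Polynomial.eval (x : ℂ)) (normHermite_succ i)
    simp only [Polynomial.eval_mul, Polynomial.eval_add, Polynomial.eval_natCast,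
      Polynomial.eval_one, Polynomial.eval_sub, Polynomial.eval_X] at h3
    simp only [Polynomial.derivative_mul, Polynomial.eval_add, Polynomial.eval_mul]
    linear_combination (-(normHermite j).eval (x : ℂ)) * Complex.exp (-(x : ℂ) ^ 2 / 2) * h3
  have hi : ∀ i : ℕ, (-((i : ℂ) + 1)) ≠ 0 := fun i =>
    neg_ne_zero.mpr (by exact_mod_cast i.succ_ne_zero)
  have base : ∀ i : ℕ, ∫ x : ℝ, ((normHermite (i + 1)).eval (x : ℂ)
      * (normHermite 0).eval (x : ℂ)) * Complex.exp (-(x : ℂ) ^ 2 / 2) = 0 := by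
    intro i
    have h := key i 0
    simp only [derivative_normHermite_zero, Polynomial.eval_zero, mul_zero, add_zero,
      mul_assoc (-((i : ℂ) + 1))] at h
    rw [integral_const_mul] at h
    exact (mul_eq_zero.mp h).resolve_left (hi i)
  induction i generalizing j with
  | zero =>
    obtain ⟨j, rfl⟩ := Nat.exists_eq_succ_of_ne_zero hij.symm
    simpa only [mul_comm ((normHermite 0).eval _)] using base j
  | succ i ih =>
    cases j with
    | zero => exact base i
    | succ j =>
      have h := key i (j + 1)
      simp only [derivative_normHermite_succ, add_mul _ _ (Complex.exp _),
        mul_assoc (-((i : ℂ) + 1))] at h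
      have hI : ∀ a b : ℕ, Integrable fun x : ℝ => ((normHermite a).eval (x : ℂ)
          * (normHermite b).eval (x : ℂ)) * Complex.exp (-(x : ℂ) ^ 2 / 2) := fun a b =>
        ((SlowGrowth.polynomial _).mul (SlowGrowth.polynomial _)).integrable
      rw [integral_add ((hI _ _).const_mul _) (hI _ _), integral_const_mul,
        ih (by omega), add_zero] at h
      exact (mul_eq_zero.mp h).resolve_left (hi i)

/-! ### The coefficients of `adj (w I - X)` -/

variable {N : ℕ}

/-- The matrix coefficient of `wⁱ` in `adj (w I - X)`. -/
noncomputable def adjCoeff (X : Matrix (Fin N) (Fin N) ℂ) (i : ℕ) : Matrix (Fin N) (Fin N) ℂ :=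
  Matrix.of fun r s => (X.charmatrix.adjugate r s).coeff i

/-- The coefficient sequence of `w * v(w)`, where `v` is the coefficient sequence of `v(w)`. -/
def shiftCoeff {V : Type*} [Zero V] (v : ℕ → V) : ℕ → V
  | 0 => 0
  | i + 1 => v i

lemma coeff_mul_X_eq_shiftCoeff (p : ℂ[X]) (i : ℕ) :
    (p * Polynomial.X).coeff i = shiftCoeff (fun i => p.coeff i) i := by
  cases i <;> simp [shiftCoeff]

lemma shiftCoeff_adjCoeff_apply (X : Matrix (Fin N) (Fin N) ℂ) (i : ℕ) (r s : Fin N) :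
    shiftCoeff (adjCoeff X) i r s
      = shiftCoeff (fun i => (X.charmatrix.adjugate r s).coeff i) i := by
  cases i <;> simp [shiftCoeff, adjCoeff]

lemma coeff_smul_one_apply (p : ℂ[X]) (i : ℕ) (r s : Fin N) :
    ((p • (1 : Matrix (Fin N) (Fin N) ℂ[X])) r s).coeff i
      = (p.coeff i • (1 : Matrix (Fin N) (Fin N) ℂ)) r s := by
  by_cases hrs : r = s <;> simp [hrs]

lemma adjCoeff_mul (X : Matrix (Fin N) (Fin N) ℂ) (i : ℕ) :
    adjCoeff X i * X = shiftCoeff (adjCoeff X) i - X.charpoly.coeff i • 1 := by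
  have h0 : X.charmatrix.adjugate * (Matrix.diagonal (fun _ => Polynomial.X) - X.map Polynomial.C)
      = X.charpoly • 1 := Matrix.adjugate_mul X.charmatrix
  rw [Matrix.mul_sub] at h0
  ext r s
  have h := congrArg (fun M => (M r s).coeff i) h0
  simp only [Matrix.sub_apply, Matrix.mul_diagonal, Polynomial.coeff_sub, coeff_smul_one_apply,
    coeff_mul_X_eq_shiftCoeff] at h
  simp only [Matrix.mul_apply, Matrix.map_apply, Polynomial.finsetSum_coeff,
    Polynomial.coeff_mul_C] at h
  rw [Matrix.sub_apply, shiftCoeff_adjCoeff_apply, Matrix.mul_apply, ← h]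
  simp [adjCoeff]

lemma mul_adjCoeff (X : Matrix (Fin N) (Fin N) ℂ) (i : ℕ) :
    X * adjCoeff X i = shiftCoeff (adjCoeff X) i - X.charpoly.coeff i • 1 := by
  have h0 : (Matrix.diagonal (fun _ => Polynomial.X) - X.map Polynomial.C) * X.charmatrix.adjugate
      = X.charpoly • 1 := Matrix.mul_adjugate X.charmatrix
  rw [Matrix.sub_mul] at h0
  ext r s
  have h := congrArg (fun M => (M r s).coeff i) h0
  simp only [Matrix.sub_apply, Matrix.diagonal_mul, Polynomial.coeff_sub, coeff_smul_one_apply,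
    mul_comm Polynomial.X, coeff_mul_X_eq_shiftCoeff] at h
  simp only [Matrix.mul_apply, Matrix.map_apply, Polynomial.finsetSum_coeff,
    Polynomial.coeff_C_mul] at h
  rw [Matrix.sub_apply, shiftCoeff_adjCoeff_apply, Matrix.mul_apply, ← h]
  simp [adjCoeff]

lemma det_smul_one_sub (X : Matrix (Fin N) (Fin N) ℂ) (w : ℂ) :
    (w • (1 : Matrix (Fin N) (Fin N) ℂ) - X).det = X.charpoly.eval w := by
  rw [Matrix.eval_charpoly, Matrix.smul_one_eq_diagonal, Matrix.scalar_apply]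

lemma adjugate_smul_one_sub_apply (X : Matrix (Fin N) (Fin N) ℂ) (w : ℂ) (r s : Fin N) :
    (w • (1 : Matrix (Fin N) (Fin N) ℂ) - X).adjugate r s
      = (X.charmatrix.adjugate r s).eval w := by
  have h : w • (1 : Matrix (Fin N) (Fin N) ℂ) - X
      = (Polynomial.evalRingHom w).mapMatrix X.charmatrix := by
    ext r s
    by_cases hrs : r = s <;> simp [hrs]
  rw [h, ← RingHom.map_adjugate]
  rfl

/-- The polynomial `w ↦ uᵀ adj (w I - X) v`. -/
noncomputable def pairPoly (X : Matrix (Fin N) (Fin N) ℂ) (u v : Fin N → ℂ) : ℂ[X] :=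
  ∑ r, ∑ s, Polynomial.C (u r * v s) * X.charmatrix.adjugate r s

lemma eval_pairPoly (X : Matrix (Fin N) (Fin N) ℂ) (u v : Fin N → ℂ) (w : ℂ) :
    (pairPoly X u v).eval w
      = u ⬝ᵥ ((w • (1 : Matrix (Fin N) (Fin N) ℂ) - X).adjugate *ᵥ v) := by
  simp only [pairPoly, Polynomial.eval_finsetSum, Polynomial.eval_mul, Polynomial.eval_C,
    dotProduct, Matrix.mulVec, adjugate_smul_one_sub_apply, Finset.mul_sum]
  exact Finset.sum_congr rfl fun r _ => Finset.sum_congr rfl fun s _ => by ring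

lemma coeff_pairPoly (X : Matrix (Fin N) (Fin N) ℂ) (u v : Fin N → ℂ) (i : ℕ) :
    (pairPoly X u v).coeff i = u ⬝ᵥ (adjCoeff X i *ᵥ v) := by
  simp only [pairPoly, Polynomial.finsetSum_coeff, Polynomial.coeff_C_mul,
    dotProduct, Matrix.mulVec, adjCoeff, Matrix.of_apply, Finset.mul_sum]
  exact Finset.sum_congr rfl fun r _ => Finset.sum_congr rfl fun s _ => by ring

/-! ### Hermite transforms of coefficient sequences -/

/-- The coefficient of `wᵐ` in `exp (x w - w² / 2) * ∑ᵢ vᵢ wⁱ`. -/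
noncomputable def hermSum {V : Type*} [AddCommMonoid V] [Module ℂ V] (m : ℕ) (v : ℕ → V) (x : ℂ) :
    V :=
  ∑ i ∈ Finset.range (m + 1), (normHermite (m - i)).eval x • v i

/-- Multiplication of the generating function by `w` is differentiation of its coefficients
in `x`. -/
lemma hermSum_shiftCoeff {V : Type*} [AddCommMonoid V] [Module ℂ V] (m : ℕ) (v : ℕ → V) (x : ℂ) :
    hermSum m (shiftCoeff v) x
      = ∑ i ∈ Finset.range (m + 1), (Polynomial.derivative (normHermite (m - i))).eval x • v i := by
  rw [hermSum, Finset.sum_range_succ', Finset.sum_range_succ]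
  simp only [shiftCoeff, smul_zero, add_zero, Nat.sub_self, derivative_normHermite_zero,
    Polynomial.eval_zero, zero_smul]
  refine Finset.sum_congr rfl fun i hi => ?_
  have hi' : i < m := by simpa using hi
  have e : m - i = (m - (i + 1)) + 1 := by omega
  rw [e, derivative_normHermite_succ]

lemma hasDerivAt_hermSum (m : ℕ) (v : ℕ → Fin N → ℂ) (r : Fin N) (x : ℝ) :
    HasDerivAt (fun x : ℝ => hermSum m v (x : ℂ) r) (hermSum m (shiftCoeff v) (x : ℂ) r) x := by
  rw [hermSum_shiftCoeff]
  simp only [hermSum, Finset.sum_apply, Pi.smul_apply, smul_eq_mul]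
  exact HasDerivAt.fun_sum fun i _ =>
    ((Polynomial.hasDerivAt _ _).comp_ofReal).mul_const _

lemma slowGrowth_hermSum (m : ℕ) (v : ℕ → Fin N → ℂ) (r : Fin N) :
    SlowGrowth fun x : ℝ => hermSum m v (x : ℂ) r := by
  simp only [hermSum, Finset.sum_apply, Pi.smul_apply, smul_eq_mul]
  exact SlowGrowth.sum _ fun i _ => (SlowGrowth.polynomial _).mul (SlowGrowth.const _)

lemma hermSum_vecMul (X : Matrix (Fin N) (Fin N) ℂ) (a : Fin N → ℂ) (m : ℕ) (x : ℂ) :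
    hermSum m (fun i => a ᵥ* adjCoeff X i) x ᵥ* X
      = hermSum m (shiftCoeff fun i => a ᵥ* adjCoeff X i) x
        - hermSum m (fun i => X.charpoly.coeff i) x • a := by
  have h : ∀ i, shiftCoeff (fun i => a ᵥ* adjCoeff X i) i = a ᵥ* shiftCoeff (adjCoeff X) i := by
    intro i
    cases i <;> simp [shiftCoeff]
  simp only [hermSum, Matrix.sum_vecMul, Finset.sum_smul, ← Finset.sum_sub_distrib]
  refine Finset.sum_congr rfl fun i _ => ?_
  rw [h, Matrix.smul_vecMul, Matrix.vecMul_vecMul, adjCoeff_mul, Matrix.vecMul_sub,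
    Matrix.vecMul_smul, Matrix.vecMul_one, smul_sub, smul_assoc]

lemma hermSum_mulVec (Z : Matrix (Fin N) (Fin N) ℂ) (b : Fin N → ℂ) (n : ℕ) (x : ℂ) :
    Z *ᵥ hermSum n (fun j => adjCoeff Z j *ᵥ b) x
      = hermSum n (shiftCoeff fun j => adjCoeff Z j *ᵥ b) x
        - hermSum n (fun j => Z.charpoly.coeff j) x • b := by
  have h : ∀ i, shiftCoeff (fun i => adjCoeff Z i *ᵥ b) i = shiftCoeff (adjCoeff Z) i *ᵥ b := by
    intro i
    cases i <;> simp [shiftCoeff]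
  simp only [hermSum, Matrix.mulVec_sum, Finset.sum_smul, ← Finset.sum_sub_distrib]
  refine Finset.sum_congr rfl fun i _ => ?_
  rw [h, Matrix.mulVec_smul, Matrix.mulVec_mulVec, mul_adjCoeff, Matrix.sub_mulVec,
    Matrix.smul_mulVec, Matrix.one_mulVec, smul_sub, smul_assoc]

lemma hermSum_vecMul_dotProduct (A : ℕ → Matrix (Fin N) (Fin N) ℂ) (u v : Fin N → ℂ) (m : ℕ)
    (x : ℂ) : hermSum m (fun i => u ᵥ* A i) x ⬝ᵥ v = u ⬝ᵥ hermSum m (fun i => A i *ᵥ v) x := by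
  simp only [hermSum, sum_dotProduct, dotProduct_sum, smul_dotProduct, dotProduct_smul]
  exact Finset.sum_congr rfl fun i _ => by rw [dotProduct_mulVec]

lemma hermSum_dotProduct_hermSum (v w : ℕ → Fin N → ℂ) (m n : ℕ) (x : ℂ) :
    hermSum m v x ⬝ᵥ hermSum n w x = ∑ i ∈ Finset.range (m + 1), ∑ j ∈ Finset.range (n + 1),
      (v i ⬝ᵥ w j) * ((normHermite (m - i)).eval x * (normHermite (n - j)).eval x) := by
  simp only [hermSum, sum_dotProduct]
  refine Finset.sum_congr rfl fun i _ => ?_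
  simp only [dotProduct_sum, smul_dotProduct, dotProduct_smul, smul_eq_mul]
  exact Finset.sum_congr rfl fun j _ => by ring

lemma hermSum_mul_hermSum (v w : ℕ → ℂ) (m n : ℕ) (x : ℂ) :
    hermSum m v x * hermSum n w x = ∑ i ∈ Finset.range (m + 1), ∑ j ∈ Finset.range (n + 1),
      (v i * w j) * ((normHermite (m - i)).eval x * (normHermite (n - j)).eval x) := by
  simp only [hermSum, Finset.sum_mul_sum, smul_eq_mul]
  exact Finset.sum_congr rfl fun i _ => Finset.sum_congr rfl fun j _ => by ring

/-- The Taylor coefficients defining the two sequences are Hermite transforms of the coefficients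
of the determinant and the adjugate. -/
lemma taylor_wave (X : Matrix (Fin N) (Fin N) ℂ) (u v : Fin N → ℂ) (m : ℕ) (x : ℂ) :
    (1 / (m.factorial : ℂ)) * iteratedDeriv m (fun w : ℂ => Complex.exp (x * w - w ^ 2 / 2) *
        ((w • (1 : Matrix (Fin N) (Fin N) ℂ) - X).det
          + u ⬝ᵥ ((w • (1 : Matrix (Fin N) (Fin N) ℂ) - X).adjugate *ᵥ v))) 0
      = hermSum m (fun i => X.charpoly.coeff i) x + u ⬝ᵥ
        hermSum m (fun i => adjCoeff X i *ᵥ v) x := by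
  have h := taylor_generating_mul_polynomial x (X.charpoly + pairPoly X u v) m
  simp only [Polynomial.eval_add, eval_pairPoly, Polynomial.coeff_add, coeff_pairPoly,
    ← det_smul_one_sub] at h
  rw [h, hermSum, hermSum, dotProduct_sum, ← Finset.sum_add_distrib]
  simp only [mul_add, dotProduct_smul, smul_eq_mul]

/-! ### The resolvent of `X + Z` along the real line -/

section Resolvent

open scoped Matrix.Norms.Operator

lemma inv_eq_resolvent (X Z : Matrix (Fin N) (Fin N) ℂ) (x : ℂ) :
    (x • (1 : Matrix (Fin N) (Fin N) ℂ) - X - Z)⁻¹ = resolvent (X + Z) x := by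
  rw [resolvent, Matrix.nonsing_inv_eq_ringInverse, Algebra.algebraMap_eq_smul_one, sub_sub]

lemma hasDerivAt_inv_apply (X Z : Matrix (Fin N) (Fin N) ℂ) (x : ℝ)
    (hx : IsUnit ((x : ℂ) • (1 : Matrix (Fin N) (Fin N) ℂ) - X - Z)) (r s : Fin N) :
    HasDerivAt (fun x : ℝ => ((x : ℂ) • (1 : Matrix (Fin N) (Fin N) ℂ) - X - Z)⁻¹ r s)
      (-(((x : ℂ) • (1 : Matrix (Fin N) (Fin N) ℂ) - X - Z)⁻¹
        * ((x : ℂ) • (1 : Matrix (Fin N) (Fin N) ℂ) - X - Z)⁻¹) r s) x := by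
  have hk : (x : ℂ) ∈ resolventSet ℂ (X + Z) := by
    rw [spectrum.mem_resolventSet_iff, Algebra.algebraMap_eq_smul_one, ← sub_sub]
    exact hx
  have h := spectrum.hasDerivAt_resolvent_const_left hk
  have h' := (hasDerivAt_pi.mp (hasDerivAt_pi.mp h r) s).comp_ofReal
  simp only [inv_eq_resolvent]
  rw [← sq]
  exact h'

lemma slowGrowth_inv_apply (X Z : Matrix (Fin N) (Fin N) ℂ)
    (hXZ : ∀ x : ℝ, IsUnit ((x : ℂ) • (1 : Matrix (Fin N) (Fin N) ℂ) - X - Z)) (r s : Fin N) :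
    SlowGrowth fun x : ℝ => ((x : ℂ) • (1 : Matrix (Fin N) (Fin N) ℂ) - X - Z)⁻¹ r s := by
  have hcont : Continuous fun x : ℝ =>
      ((x : ℂ) • (1 : Matrix (Fin N) (Fin N) ℂ) - X - Z)⁻¹ r s :=
    continuous_iff_continuousAt.mpr fun x => (hasDerivAt_inv_apply X Z x (hXZ x) r s).continuousAt
  have hlim : Filter.Tendsto (fun x : ℝ =>
      ((x : ℂ) • (1 : Matrix (Fin N) (Fin N) ℂ) - X - Z)⁻¹ r s)
      (Filter.cocompact ℝ) (nhds 0) := by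
    have h := (spectrum.resolvent_tendsto_cobounded (𝕜 := ℂ) (X + Z)).comp
      (RCLike.tendsto_ofReal_cobounded_cobounded ℂ)
    rw [Metric.cobounded_eq_cocompact] at h
    simp only [inv_eq_resolvent]
    exact tendsto_pi_nhds.mp (tendsto_pi_nhds.mp h r) s
  obtain ⟨C, hC⟩ := (ZeroAtInftyContinuousMap.isBounded_range
    (⟨⟨_, hcont⟩, hlim⟩ : ZeroAtInftyContinuousMap ℝ ℂ)).exists_norm_le
  exact SlowGrowth.of_bounded hcont fun x => hC _ ⟨x, rfl⟩

end Resolvent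

/-! ### The bilinear identity -/

/-- With `M = x I - X - Z` and `G = M⁻¹`, the rank-one condition turns `G b aᵀ G` into
`X G - G X - G²`. The hypotheses on `α` and `β` are the coefficient forms of
`aᵀ adj (w I - X) (w I - X) = det (w I - X) aᵀ` and its analogue for `Z`. As `G² = -dG/dx`, if
`α'` and `β'` are the derivatives of `α` and `β` then the bracket on the right is `u' - x u` for
`u = αᵀ G β`. -/
lemma bilinear_identity (X Z G : Matrix (Fin N) (Fin N) ℂ) (a b : Fin N → ℂ) (x : ℂ)
    (hrank : X * Z - Z * X - 1 = Matrix.vecMulVec b a)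
    (hMG : (x • (1 : Matrix (Fin N) (Fin N) ℂ) - X - Z) * G = 1)
    (hGM : G * (x • (1 : Matrix (Fin N) (Fin N) ℂ) - X - Z) = 1)
    (α α' β β' : Fin N → ℂ) (φ γ : ℂ)
    (hα : α ᵥ* X = α' - φ • a) (hβ : Z *ᵥ β = β' - γ • b) :
    (φ + α ⬝ᵥ (G *ᵥ b)) * (γ + a ⬝ᵥ (G *ᵥ β))
      = (φ * γ + α ⬝ᵥ β) + ((α' ⬝ᵥ (G *ᵥ β) + α ⬝ᵥ (G *ᵥ β') - α ⬝ᵥ ((G * G) *ᵥ β))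
        - x * (α ⬝ᵥ (G *ᵥ β))) := by
  have hcomm : X * Z - Z * X = (x • (1 : Matrix (Fin N) (Fin N) ℂ) - X - Z) * X
      - X * (x • (1 : Matrix (Fin N) (Fin N) ℂ) - X - Z) := by
    simp only [sub_mul, mul_sub, smul_mul_assoc, mul_smul_comm, one_mul, mul_one]
    abel
  have hGbaG : G * Matrix.vecMulVec b a * G = X * G - G * X - G * G := by
    rw [← hrank, hcomm, mul_sub, mul_sub, ← mul_assoc, hGM, one_mul, sub_mul, sub_mul,
      mul_assoc G (X * _), mul_assoc X, hMG, mul_one, mul_one]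
  have hGX : G * X = x • G - 1 - G * Z := by
    rw [← hGM]
    simp only [mul_sub, mul_smul_comm, mul_one]
    abel
  have h1 : α ⬝ᵥ ((G * Matrix.vecMulVec b a * G) *ᵥ β)
      = (α ⬝ᵥ (G *ᵥ b)) * (a ⬝ᵥ (G *ᵥ β)) := by
    rw [← Matrix.mulVec_mulVec, ← Matrix.mulVec_mulVec, Matrix.vecMulVec_mulVec,
      Matrix.mulVec_smul, dotProduct_smul]
    simp
  have h2 : α ⬝ᵥ ((X * G) *ᵥ β) = α' ⬝ᵥ (G *ᵥ β) - φ * (a ⬝ᵥ (G *ᵥ β)) := by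
    rw [← Matrix.mulVec_mulVec, dotProduct_mulVec, hα, sub_dotProduct, smul_dotProduct,
      smul_eq_mul]
  have h3 : α ⬝ᵥ ((G * X) *ᵥ β) = x * (α ⬝ᵥ (G *ᵥ β)) - α ⬝ᵥ β
      - (α ⬝ᵥ (G *ᵥ β') - γ * (α ⬝ᵥ (G *ᵥ b))) := by
    rw [hGX, Matrix.sub_mulVec, Matrix.sub_mulVec, Matrix.smul_mulVec, Matrix.one_mulVec,
      ← Matrix.mulVec_mulVec, hβ, Matrix.mulVec_sub, Matrix.mulVec_smul]
    simp only [dotProduct_sub, dotProduct_smul, smul_eq_mul]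
  rw [hGbaG, Matrix.sub_mulVec, Matrix.sub_mulVec, dotProduct_sub, dotProduct_sub, h2, h3] at h1
  linear_combination -h1

/-- A function of the product `w z` has no coefficient of `wⁱ zʲ` off the diagonal, here applied to
the doubly-normalized wave function at second time `0`. -/
lemma coeff_of_product_dependence (X Z : Matrix (Fin N) (Fin N) ℂ) (a b : Fin N → ℂ) (c : ℕ → ℂ)
    (hc : ∀ w z : ℂ,
      (w • (1 : Matrix (Fin N) (Fin N) ℂ) - X).det * (z • (1 : Matrix (Fin N) (Fin N) ℂ) - Z).det
        + a ⬝ᵥ ((w • (1 : Matrix (Fin N) (Fin N) ℂ) - X).adjugate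
            * (z • (1 : Matrix (Fin N) (Fin N) ℂ) - Z).adjugate).mulVec b
      = ∑ k ∈ Finset.range (N + 1), c k * (w * z) ^ k) {i j : ℕ} (hij : i ≠ j) :
    X.charpoly.coeff i * Z.charpoly.coeff j
      + (a ᵥ* adjCoeff X i) ⬝ᵥ (adjCoeff Z j *ᵥ b) = 0 := by
  -- compare coefficients of `wⁱ` for fixed `z`
  have h1 : ∀ z : ℂ, X.charpoly.coeff i * Z.charpoly.eval z
      + (pairPoly Z (a ᵥ* adjCoeff X i) b).eval z
      = if i < N + 1 then c i * z ^ i else 0 := by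
    intro z
    have hp : X.charpoly * Polynomial.C (Z.charpoly.eval z)
        + pairPoly X a ((z • (1 : Matrix (Fin N) (Fin N) ℂ) - Z).adjugate *ᵥ b)
        = ∑ k ∈ Finset.range (N + 1), Polynomial.C (c k * z ^ k) * Polynomial.X ^ k := by
      refine Polynomial.funext fun w => ?_
      have h := hc w z
      rw [← Matrix.mulVec_mulVec] at h
      simp only [Polynomial.eval_add, Polynomial.eval_mul, Polynomial.eval_C, eval_pairPoly,
        ← det_smul_one_sub, Polynomial.eval_finsetSum, Polynomial.eval_pow, Polynomial.eval_X]
      rw [h]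
      exact Finset.sum_congr rfl fun k _ => by ring
    have h := congrArg (fun p => Polynomial.coeff p i) hp
    simp only [Polynomial.coeff_add, Polynomial.coeff_mul_C, coeff_pairPoly,
      Polynomial.finsetSum_coeff, Polynomial.coeff_C_mul_X_pow, Finset.sum_ite_eq,
      Finset.mem_range] at h
    rw [eval_pairPoly, ← dotProduct_mulVec, h]
  have hp : Polynomial.C (X.charpoly.coeff i) * Z.charpoly + pairPoly Z (a ᵥ* adjCoeff X i) b
      = Polynomial.C (if i < N + 1 then c i else 0) * Polynomial.X ^ i := by
    refine Polynomial.funext fun z => ?_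
    simp only [Polynomial.eval_add, Polynomial.eval_mul, Polynomial.eval_C, Polynomial.eval_pow,
      Polynomial.eval_X, h1 z]
    split_ifs <;> simp
  have h := congrArg (fun p => Polynomial.coeff p j) hp
  simpa only [Polynomial.coeff_add, Polynomial.coeff_C_mul, coeff_pairPoly,
    Polynomial.coeff_X_pow, if_neg hij.symm, mul_zero] using h

end Auxiliary

/-! ### Bi-orthogonality -/

/-- Bi-orthogonality in the Exceptional Hermite situation: if the doubly-normalized wave
function at second time `0` depends on `w` and `z` only through the product `wz`, then
the generated sequences are bi-orthogonal with respect to the Hermite product. -/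
theorem biorthogonality_of_product_dependence {N : ℕ} (hN : 0 < N)
    (X Z : Matrix (Fin N) (Fin N) ℂ) (a b : Fin N → ℂ)
    (hrank : X * Z - Z * X - 1 = Matrix.vecMulVec b a)
    (hXZ : ∀ x : ℝ, IsUnit ((x : ℂ) • (1 : Matrix (Fin N) (Fin N) ℂ) - X - Z))
    (c : ℕ → ℂ)
    (hc : ∀ w z : ℂ,
      (w • (1 : Matrix (Fin N) (Fin N) ℂ) - X).det * (z • (1 : Matrix (Fin N) (Fin N) ℂ) - Z).det
        + a ⬝ᵥ ((w • (1 : Matrix (Fin N) (Fin N) ℂ) - X).adjugate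
            * (z • (1 : Matrix (Fin N) (Fin N) ℂ) - Z).adjugate).mulVec b
      = ∑ k ∈ Finset.range (N + 1), c k * (w * z) ^ k)
    (f g : ℕ → ℝ → ℂ)
    (hf : ∀ (m : ℕ) (x : ℝ), f m x = (1 / (m.factorial : ℂ)) *
      iteratedDeriv m (fun w : ℂ => Complex.exp ((x : ℂ) * w - w ^ 2 / 2) *
        ((w • (1 : Matrix (Fin N) (Fin N) ℂ) - X).det
          + a ⬝ᵥ ((w • (1 : Matrix (Fin N) (Fin N) ℂ) - X).adjugate
              * ((x : ℂ) • 1 - X - Z)⁻¹).mulVec b)) 0)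
    (hg : ∀ (n : ℕ) (x : ℝ), g n x = (1 / (n.factorial : ℂ)) *
      iteratedDeriv n (fun z : ℂ => Complex.exp ((x : ℂ) * z - z ^ 2 / 2) *
        ((z • (1 : Matrix (Fin N) (Fin N) ℂ) - Z).det
          + a ⬝ᵥ (((x : ℂ) • (1 : Matrix (Fin N) (Fin N) ℂ) - X - Z)⁻¹
              * (z • 1 - Z).adjugate).mulVec b)) 0)
    (m n : ℕ) (hmn : m ≠ n) :
    ∫ x : ℝ, f m x * g n x * Complex.exp (-(x : ℂ) ^ 2 / 2) = 0 := by
  set G : ℝ → Matrix (Fin N) (Fin N) ℂ :=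
    fun x => ((x : ℂ) • (1 : Matrix (Fin N) (Fin N) ℂ) - X - Z)⁻¹ with hG
  set α : ℝ → Fin N → ℂ := fun x => hermSum m (fun i => a ᵥ* adjCoeff X i) (x : ℂ) with hα
  set α' : ℝ → Fin N → ℂ :=
    fun x => hermSum m (shiftCoeff fun i => a ᵥ* adjCoeff X i) (x : ℂ) with hα'
  set β : ℝ → Fin N → ℂ := fun x => hermSum n (fun j => adjCoeff Z j *ᵥ b) (x : ℂ) with hβ
  set β' : ℝ → Fin N → ℂ :=
    fun x => hermSum n (shiftCoeff fun j => adjCoeff Z j *ᵥ b) (x : ℂ) with hβ'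
  set φ : ℝ → ℂ := fun x => hermSum m (fun i => X.charpoly.coeff i) (x : ℂ) with hφ
  set γ : ℝ → ℂ := fun x => hermSum n (fun j => Z.charpoly.coeff j) (x : ℂ) with hγ
  have hfx : ∀ x, f m x = φ x + α x ⬝ᵥ (G x *ᵥ b) := by
    intro x
    rw [hf]
    simp only [← Matrix.mulVec_mulVec]
    rw [taylor_wave, ← hermSum_vecMul_dotProduct]
  have hgx : ∀ x, g n x = γ x + a ⬝ᵥ (G x *ᵥ β x) := by
    intro x
    rw [hg]
    simp only [← Matrix.mulVec_mulVec]
    simp only [dotProduct_mulVec a]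
    rw [taylor_wave]
  have hGd : ∀ (r s : Fin N) (x : ℝ),
      HasDerivAt (fun x => G x r s) (-(G x * G x) r s) x :=
    fun r s x => hasDerivAt_inv_apply X Z x (hXZ x) r s
  have hGs : ∀ r s : Fin N, SlowGrowth fun x => G x r s := slowGrowth_inv_apply X Z hXZ
  -- the part of `f m * g n` of the form `u' - x u`: here `u = αᵀ (x I - X - Z)⁻¹ β` and `v = u'`
  set u : ℝ → ℂ := fun x => α x ⬝ᵥ (G x *ᵥ β x) with hu
  set v : ℝ → ℂ := fun x =>
    α' x ⬝ᵥ (G x *ᵥ β x) + α x ⬝ᵥ (G x *ᵥ β' x) - α x ⬝ᵥ ((G x * G x) *ᵥ β x) with hv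
  have hbil : ∀ {P : ℝ → Fin N → ℂ} {Q : ℝ → Matrix (Fin N) (Fin N) ℂ} {R : ℝ → Fin N → ℂ},
      (∀ r, SlowGrowth fun x => P x r) → (∀ r s, SlowGrowth fun x => Q x r s) →
      (∀ r, SlowGrowth fun x => R x r) → SlowGrowth fun x => P x ⬝ᵥ (Q x *ᵥ R x) := by
    intro P Q R hP hQ hR
    simp only [dotProduct, Matrix.mulVec]
    exact SlowGrowth.sum _ fun r _ => (hP r).mul (SlowGrowth.sum _ fun s _ => (hQ r s).mul (hR s))
  have hus : SlowGrowth u :=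
    hbil (slowGrowth_hermSum m _) hGs (slowGrowth_hermSum n _)
  have hGGs : ∀ r s : Fin N, SlowGrowth fun x => (G x * G x) r s := by
    intro r s
    simp only [Matrix.mul_apply]
    exact SlowGrowth.sum _ fun t _ => (hGs r t).mul (hGs t s)
  have hvs : SlowGrowth v :=
    ((hbil (slowGrowth_hermSum m _) hGs (slowGrowth_hermSum n _)).add
      (hbil (slowGrowth_hermSum m _) hGs (slowGrowth_hermSum n _))).sub
      (hbil (slowGrowth_hermSum m _) hGGs (slowGrowth_hermSum n _))
  have hud : ∀ x, HasDerivAt u (v x) x := by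
    intro x
    have hGβ : ∀ r, HasDerivAt (fun x => ∑ s, G x r s * β x s)
        (∑ s, (-(G x * G x) r s * β x s + G x r s * β' x s)) x := fun r =>
      HasDerivAt.fun_sum fun s _ => (hGd r s x).mul (hasDerivAt_hermSum n _ s x)
    have hue : u = fun x => ∑ r, α x r * ∑ s, G x r s * β x s := rfl
    have h : HasDerivAt (fun x => ∑ r, α x r * ∑ s, G x r s * β x s)
        (∑ r, (α' x r * ∑ s, G x r s * β x s
        + α x r * ∑ s, (-(G x * G x) r s * β x s + G x r s * β' x s))) x :=
      HasDerivAt.fun_sum fun r _ => (hasDerivAt_hermSum m _ r x).mul (hGβ r)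
    rw [hue]
    refine h.congr_deriv ?_
    simp only [hv, dotProduct, Matrix.mulVec, ← Finset.sum_add_distrib, ← Finset.sum_sub_distrib]
    refine Finset.sum_congr rfl fun r _ => ?_
    rw [Finset.sum_add_distrib]
    simp only [neg_mul, Finset.sum_neg_distrib]
    ring
  -- the remaining part is a combination of products of Hermite polynomials; by `hc` its
  -- coefficients vanish for `i ≠ j`
  have hdiag : ∀ x, φ x * γ x + α x ⬝ᵥ β x = ∑ i ∈ Finset.range (m + 1),
      ∑ j ∈ Finset.range (n + 1), (X.charpoly.coeff i * Z.charpoly.coeff j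
        + (a ᵥ* adjCoeff X i) ⬝ᵥ (adjCoeff Z j *ᵥ b)) *
        ((normHermite (m - i)).eval (x : ℂ) * (normHermite (n - j)).eval (x : ℂ)) := by
    intro x
    simp only [hφ, hγ, hα, hβ, hermSum_mul_hermSum, hermSum_dotProduct_hermSum, add_mul,
      Finset.sum_add_distrib]
  have hHs : ∀ i j : ℕ, SlowGrowth fun x : ℝ => (X.charpoly.coeff i * Z.charpoly.coeff j
      + (a ᵥ* adjCoeff X i) ⬝ᵥ (adjCoeff Z j *ᵥ b)) *
      ((normHermite (m - i)).eval (x : ℂ) * (normHermite (n - j)).eval (x : ℂ)) := fun i j =>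
    (SlowGrowth.const _).mul ((SlowGrowth.polynomial _).mul (SlowGrowth.polynomial _))
  have hmain : ∀ x : ℝ, f m x * g n x * Complex.exp (-(x : ℂ) ^ 2 / 2)
      = (∑ i ∈ Finset.range (m + 1), ∑ j ∈ Finset.range (n + 1),
          (X.charpoly.coeff i * Z.charpoly.coeff j
            + (a ᵥ* adjCoeff X i) ⬝ᵥ (adjCoeff Z j *ᵥ b)) *
          ((normHermite (m - i)).eval (x : ℂ) * (normHermite (n - j)).eval (x : ℂ))
            * Complex.exp (-(x : ℂ) ^ 2 / 2))
        + (v x - x * u x) * Complex.exp (-(x : ℂ) ^ 2 / 2) := by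
    intro x
    have hdet := (Matrix.isUnit_iff_isUnit_det _).mp (hXZ x)
    have h := bilinear_identity X Z (G x) a b x hrank (Matrix.mul_nonsing_inv _ hdet)
      (Matrix.nonsing_inv_mul _ hdet) (α x) (α' x) (β x) (β' x) (φ x) (γ x)
      (hermSum_vecMul X a m x) (hermSum_mulVec Z b n x)
    rw [hfx, hgx, h, hdiag, add_mul]
    simp only [Finset.sum_mul, hu, hv]
  simp only [hmain]
  rw [integral_add (integrable_finsetSum _ fun i _ => integrable_finsetSum _ fun j _ =>
      (hHs i j).integrable) (hvs.sub (SlowGrowth.id.mul hus)).integrable,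
    integral_gaussian_exact hus hvs hud, add_zero,
    integral_finsetSum _ fun i _ => integrable_finsetSum _ fun j _ => (hHs i j).integrable]
  refine Finset.sum_eq_zero fun i hi => ?_
  rw [integral_finsetSum _ fun j _ => (hHs i j).integrable]
  refine Finset.sum_eq_zero fun j hj => ?_
  by_cases hij : i = j
  · -- on the diagonal, `m - i ≠ n - i`, since `i ≤ m` and `i ≤ n`
    have hne : m - i ≠ n - j := by
      simp only [Finset.mem_range] at hi hj
      omega
    simp only [mul_assoc (X.charpoly.coeff i * Z.charpoly.coeff j + _)]
    rw [integral_const_mul, integral_normHermite_mul hne, mul_zero]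
  · simp [coeff_of_product_dependence X Z a b c hc hij]
end

section
/- Suppose xI − X − Z is invertible for every real x, and suppose there exist complex numbers c_0, …, c_N such that det(wI−X)·det(zI−Z) + aᵀ·adj(wI−X)·adj(zI−Z)·b = Σ_{k=0}^{N} c_k·(wz)^k for all complex w, z. With f̂_n and ĝ_n defined as the n-th Taylor coefficients at 0 of w ↦ exp(xw − w²/2)·(det(wI−X) + aᵀ·adj(wI−X)·(xI−X−Z)⁻¹·b) and z ↦ exp(xz − z²/2)·(det(zI−Z) + aᵀ·(xI−X−Z)⁻¹·adj(zI−Z)·b) respectively, for every natural number n one has ∫_{-∞}^{∞} f̂_n(x)·ĝ_n(x)·exp(−x²/2) dx = √(2π)·Σ_{k=0}^{min(n,N)} c_k/(n−k)!. Equivalently, the diagonal Hermite products (the norms) are √(2π) times the Taylor coefficients at z = 0 of z ↦ e^z·Σ_{k=0}^{N} c_k z^k, which is the doubly-normalized wave function evaluated at first time 1 and second time 0. -/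
/-!
Write `G(x) = (xI − X − Z)⁻¹` and let `h_k = He_k / k!` be the Taylor coefficients in `w` of
`exp (x w − w² / 2)`. Taking the `n`-th Taylor coefficient of that exponential times a polynomial
`q(w)` is a linear map `q ↦ hermL n q`, with values in the polynomials in `x`, and differentiating
in `x` amounts to multiplying `q` by `w` (`derivative_hermL`). Apply it to `det (wI − X)`,
`aᵀ adj (wI − X)`, `det (zI − Z)` and `adj (zI − Z) b`, and call the results `δ`, `αᵀ`, `ε`, `β`.
Then

* `f_n = δ + αᵀ G b` and `g_n = ε + aᵀ G β`;
* `α' = δ a + Xᵀ α` and `β' = ε b + Z β`, because `w adj (wI − X) = det (wI − X) + adj (wI − X) X`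
  (`hasDerivAt_hermRow`);
* the rank-one condition gives `X G + G Z − x G = −I + G² + G b aᵀ G`, whence
  `(αᵀ G β)' − x αᵀ G β = f_n g_n − (δ ε + αᵀ β)` (`exactness_identity`).

The left side of the last equation times `exp (−x² / 2)` is the derivative of
`exp (−x² / 2) αᵀ G β`, so its integral vanishes; every function involved has polynomial growth,
since `det (xI − X − Z)` is bounded away from zero on the real line. Hence `f_n g_n` may be replaced
by `δ ε + αᵀ β` under the integral. By the hypothesis on `c` this equals `∑ c_k h_{n-k}²`
(`coefficient_identity`), and `∫ h_j² exp (−x² / 2) = √(2π) / j!`.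
-/

open Matrix MeasureTheory
open Polynomial Filter Topology

/-! ### Normalized Hermite polynomials -/

/-- The normalized Hermite polynomial `He_n / n!`, defined by the recursion
`(n + 1) h_{n+1} = x h_n − h_n'`. -/
noncomputable def hermCoeff : ℕ → ℂ[X]
  | 0 => 1
  | n + 1 => C (1 / ((n : ℂ) + 1)) * (X * hermCoeff n - derivative (hermCoeff n))

lemma hermCoeff_succ (n : ℕ) :
    C ((n : ℂ) + 1) * hermCoeff (n + 1) = X * hermCoeff n - derivative (hermCoeff n) := by
  have h : (n : ℂ) + 1 ≠ 0 := Nat.cast_add_one_ne_zero n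
  rw [hermCoeff, ← mul_assoc, ← C_mul, mul_one_div_cancel h, C_1, one_mul]

/-- The Hermite polynomials, normalized by `1 / n!`, form an Appell sequence. -/
lemma derivative_hermCoeff_succ (n : ℕ) :
    derivative (hermCoeff (n + 1)) = hermCoeff n := by
  induction n with
  | zero => simp [hermCoeff]
  | succ k ih =>
    have h : ((k + 1 : ℕ) : ℂ) + 1 ≠ 0 := Nat.cast_add_one_ne_zero _
    have h1 := congrArg derivative (hermCoeff_succ (k + 1))
    have h2 := hermCoeff_succ k
    simp only [derivative_mul, derivative_C, derivative_X, derivative_sub, ih] at h1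
    have hC : C (((k + 1 : ℕ) : ℂ) + 1) ≠ 0 := C_ne_zero.mpr h
    apply mul_left_cancel₀ hC
    push_cast at h1 h2 ⊢
    simp only [C_add, C_1] at h1 h2 ⊢
    linear_combination h1 - h2

/-! ### Taylor coefficients and the Hermite transform -/

/-- The `m`-th Taylor coefficient of `φ` at `0`. -/
noncomputable def taylorCoeff (m : ℕ) (φ : ℂ → ℂ) : ℂ :=
  (1 / (m.factorial : ℂ)) * iteratedDeriv m φ 0

lemma taylorCoeff_add (m : ℕ) {φ ψ : ℂ → ℂ} (hφ : ContDiff ℂ ⊤ φ) (hψ : ContDiff ℂ ⊤ ψ) :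
    taylorCoeff m (fun w => φ w + ψ w) = taylorCoeff m φ + taylorCoeff m ψ := by
  have := iteratedDeriv_add (n := m) (x := (0 : ℂ))
    (hφ.contDiffAt.of_le le_top) (hψ.contDiffAt.of_le le_top)
  unfold taylorCoeff
  rw [← mul_add, ← this]; rfl

lemma taylorCoeff_const_mul (m : ℕ) (c : ℂ) (φ : ℂ → ℂ) :
    taylorCoeff m (fun w => c * φ w) = c * taylorCoeff m φ := by
  unfold taylorCoeff
  rw [iteratedDeriv_const_mul_field]; ring

lemma taylorCoeff_deriv (m : ℕ) (φ : ℂ → ℂ) :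
    taylorCoeff m (deriv φ) = ((m : ℂ) + 1) * taylorCoeff (m + 1) φ := by
  unfold taylorCoeff
  have h : (m : ℂ) + 1 ≠ 0 := Nat.cast_add_one_ne_zero m
  have h' : (m.factorial : ℂ) ≠ 0 := Nat.cast_ne_zero.mpr m.factorial_ne_zero
  rw [iteratedDeriv_succ', Nat.factorial_succ]
  push_cast
  field_simp

lemma taylorCoeff_zero_mul (φ : ℂ → ℂ) : taylorCoeff 0 (fun w => w * φ w) = 0 := by
  simp [taylorCoeff]

lemma deriv_id_mul {φ : ℂ → ℂ} (hφ : ContDiff ℂ ⊤ φ) :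
    deriv (fun w => w * φ w) = fun w => φ w + w * deriv φ w := by
  funext w
  have := ((hasDerivAt_id' w).fun_mul (hφ.differentiable (by simp) w).hasDerivAt).deriv
  simpa using this

lemma taylorCoeff_succ_mul (m : ℕ) {φ : ℂ → ℂ} (hφ : ContDiff ℂ ⊤ φ) :
    taylorCoeff (m + 1) (fun w => w * φ w) = taylorCoeff m φ := by
  induction m generalizing φ with
  | zero =>
    have hd := deriv_id_mul hφ
    simp [taylorCoeff, iteratedDeriv_succ', hd]
  | succ k ih =>
    have hφ' : ContDiff ℂ ⊤ (deriv φ) := ContDiff.deriv' (by simpa using hφ)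
    have hd := deriv_id_mul hφ
    have h : ((k + 1 : ℕ) : ℂ) + 1 ≠ 0 := Nat.cast_add_one_ne_zero _
    apply mul_left_cancel₀ h
    rw [← taylorCoeff_deriv, hd, taylorCoeff_add _ hφ (contDiff_fun_id.mul hφ'), ih hφ',
      taylorCoeff_deriv]
    push_cast; ring

/-- The generating function `exp (x w − w² / 2)` of the normalized Hermite polynomials. -/
noncomputable def hermGen (x w : ℂ) : ℂ := Complex.exp (x * w - w ^ 2 / 2)

lemma contDiff_hermGen (x : ℂ) : ContDiff ℂ ⊤ (hermGen x) := by
  unfold hermGen; fun_prop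

lemma taylorCoeff_hermGen (x : ℂ) (m : ℕ) :
    taylorCoeff m (hermGen x) = (hermCoeff m).eval x := by
  have hd : deriv (hermGen x) = fun w => x * hermGen x w + (-1) * (w * hermGen x w) := by
    funext w
    have h1 : HasDerivAt (fun w : ℂ => x * w - w ^ 2 / 2) (x - w) w := by
      have := ((hasDerivAt_id w).const_mul x).sub (((hasDerivAt_id w).pow 2).div_const 2)
      convert! this using 1
      simp
    have := h1.cexp.deriv
    unfold hermGen
    rw [this]; ring
  have hc := contDiff_hermGen x
  have key (k : ℕ) : ((k : ℂ) + 1) * taylorCoeff (k + 1) (hermGen x)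
      = x * taylorCoeff k (hermGen x) - taylorCoeff k (fun w => w * hermGen x w) := by
    rw [← taylorCoeff_deriv, hd, taylorCoeff_add _ (contDiff_const.mul hc)
      (contDiff_const.mul (contDiff_fun_id.mul hc)), taylorCoeff_const_mul]
    have := taylorCoeff_const_mul k (-1) (fun w => w * hermGen x w)
    rw [this]; ring
  induction m using Nat.strong_induction_on with
  | _ m ih =>
    match m with
    | 0 => simp [taylorCoeff, hermGen, hermCoeff]
    | k + 1 =>
      have h : (k : ℂ) + 1 ≠ 0 := Nat.cast_add_one_ne_zero _
      apply mul_left_cancel₀ h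
      have h2 := congrArg (eval x) (hermCoeff_succ k)
      simp only [eval_mul, eval_C, eval_sub, eval_X] at h2
      rw [key, ih k (by omega), h2]
      congr 1
      match k with
      | 0 => rw [taylorCoeff_zero_mul]; simp [hermCoeff]
      | j + 1 => rw [taylorCoeff_succ_mul _ hc, ih j (by omega), derivative_hermCoeff_succ]

/-- The linear map sending `q(w)` to the `m`-th Taylor coefficient in `w` of
`exp (x w − w² / 2) q(w)`, viewed as a polynomial in `x` (see `taylorCoeff_hermGen_mul`). -/
noncomputable def hermL (m : ℕ) : ℂ[X] →ₗ[ℂ] ℂ[X] :=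
  ∑ j ∈ Finset.range (m + 1), (lcoeff ℂ j).smulRight (hermCoeff (m - j))

lemma hermL_apply (m : ℕ) (q : ℂ[X]) :
    hermL m q = ∑ j ∈ Finset.range (m + 1), q.coeff j • hermCoeff (m - j) := by
  simp [hermL]

lemma hermL_zero_X_mul (q : ℂ[X]) : hermL 0 (X * q) = 0 := by
  simp [hermL_apply]

lemma hermL_succ_X_mul (m : ℕ) (q : ℂ[X]) : hermL (m + 1) (X * q) = hermL m q := by
  rw [hermL_apply, Finset.sum_range_succ', hermL_apply]
  simp [coeff_X_mul]

lemma hermL_X_pow (m k : ℕ) :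
    hermL m (X ^ k) = if k ≤ m then hermCoeff (m - k) else 0 := by
  rw [hermL_apply]
  simp [coeff_X_pow]

lemma hermL_C_mul (m : ℕ) (c : ℂ) (q : ℂ[X]) : hermL m (C c * q) = C c * hermL m q := by
  rw [← smul_eq_C_mul, map_smul, smul_eq_C_mul]

lemma derivative_hermL (m : ℕ) (q : ℂ[X]) : derivative (hermL m q) = hermL m (X * q) := by
  cases m with
  | zero => rw [hermL_zero_X_mul, hermL_apply]; simp [hermCoeff]
  | succ k =>
    rw [hermL_succ_X_mul, hermL_apply, hermL_apply, Finset.sum_range_succ]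
    simp only [derivative_add, derivative_sum, derivative_smul]
    have h0 : derivative (hermCoeff (k + 1 - (k + 1))) = 0 := by simp [hermCoeff]
    rw [h0, smul_zero, add_zero]
    refine Finset.sum_congr rfl fun j hj => ?_
    have : k + 1 - j = (k - j) + 1 := by
      have := Finset.mem_range.mp hj; omega
    rw [this, derivative_hermCoeff_succ]

lemma taylorCoeff_hermGen_mul (x : ℂ) (m : ℕ) (q : ℂ[X]) :
    taylorCoeff m (fun w => hermGen x w * q.eval w) = (hermL m q).eval x := by
  have hc := contDiff_hermGen x
  have hq (q : ℂ[X]) : ContDiff ℂ ⊤ (fun w => hermGen x w * q.eval w) :=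
    hc.mul (by simpa using q.contDiff_aeval (𝕜 := ℂ) ⊤)
  have mono (j : ℕ) : ∀ m, taylorCoeff m (fun w => hermGen x w * (X ^ j : ℂ[X]).eval w)
      = (hermL m (X ^ j)).eval x := by
    induction j with
    | zero =>
      intro m
      rw [hermL_X_pow, if_pos m.zero_le, Nat.sub_zero, ← taylorCoeff_hermGen]
      simp
    | succ j ih =>
      intro m
      have e : (fun w => hermGen x w * (X ^ (j + 1) : ℂ[X]).eval w)
          = fun w => w * (hermGen x w * (X ^ j : ℂ[X]).eval w) := by
        funext w; simp; ring
      rw [e, pow_succ']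
      cases m with
      | zero => rw [taylorCoeff_zero_mul, hermL_zero_X_mul, eval_zero]
      | succ k => rw [taylorCoeff_succ_mul _ (hq _), hermL_succ_X_mul, ih]
  induction q using Polynomial.induction_on' with
  | add p q hp hq' =>
    simp only [eval_add, mul_add, map_add]
    rw [taylorCoeff_add _ (hq p) (hq q), hp, hq']
  | monomial j c =>
    rw [← C_mul_X_pow_eq_monomial, hermL_C_mul, eval_mul, eval_C, ← mono, ← taylorCoeff_const_mul]
    congr 1
    funext w; simp; ring

/-! ### Adjugates of characteristic matrices -/

/-- The row vector `aᵀ adj (wI − X)`, with entries polynomials in `w`. The column vector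
`adj (zI − Z) b` is `resolventRow Zᵀ b`. -/
noncomputable def resolventRow {N : ℕ} (X : Matrix (Fin N) (Fin N) ℂ) (a : Fin N → ℂ) :
    Fin N → ℂ[X] :=
  (fun i => C (a i)) ᵥ* (charmatrix X).adjugate

lemma eval_adjugate_charmatrix {N : ℕ} (A : Matrix (Fin N) (Fin N) ℂ) (w : ℂ) :
    (charmatrix A).adjugate.map (eval w) = (w • (1 : Matrix (Fin N) (Fin N) ℂ) - A).adjugate := by
  have h := RingHom.map_adjugate (evalRingHom w) (charmatrix A)
  have h2 : (evalRingHom w).mapMatrix (charmatrix A)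
      = w • (1 : Matrix (Fin N) (Fin N) ℂ) - A := by
    ext i j
    simp [charmatrix_apply, Matrix.diagonal_apply, Matrix.one_apply, apply_ite (eval w)]
  rw [h2] at h
  rw [← h]; rfl

lemma eval_charpoly' {N : ℕ} (A : Matrix (Fin N) (Fin N) ℂ) (w : ℂ) :
    A.charpoly.eval w = (w • (1 : Matrix (Fin N) (Fin N) ℂ) - A).det := by
  rw [Matrix.eval_charpoly]
  congr 2
  ext i j; simp [Matrix.diagonal_apply, Matrix.one_apply]

lemma eval_resolventRow {N : ℕ} (A : Matrix (Fin N) (Fin N) ℂ) (a : Fin N → ℂ) (w : ℂ) :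
    (fun i => (resolventRow A a i).eval w)
      = a ᵥ* (w • (1 : Matrix (Fin N) (Fin N) ℂ) - A).adjugate := by
  rw [← eval_adjugate_charmatrix]
  funext i
  simp [resolventRow, Matrix.vecMul, dotProduct, eval_finsetSum]

lemma eval_resolventRow_transpose {N : ℕ} (A : Matrix (Fin N) (Fin N) ℂ) (b : Fin N → ℂ) (w : ℂ) :
    (fun i => (resolventRow Aᵀ b i).eval w)
      = (w • (1 : Matrix (Fin N) (Fin N) ℂ) - A).adjugate *ᵥ b := by
  rw [eval_resolventRow, ← Matrix.vecMul_transpose, Matrix.adjugate_transpose]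
  simp

/-- Entrywise form of `w aᵀ adj (wI − A) = det (wI − A) aᵀ + aᵀ adj (wI − A) A`. -/
lemma X_mul_resolventRow {N : ℕ} (A : Matrix (Fin N) (Fin N) ℂ) (a : Fin N → ℂ) (i : Fin N) :
    X * resolventRow A a i = C (a i) * A.charpoly + ∑ j, C (A j i) * resolventRow A a j := by
  have h : resolventRow A a ᵥ* charmatrix A = A.charpoly • fun i => C (a i) := by
    rw [resolventRow, Matrix.vecMul_vecMul, Matrix.adjugate_mul, Matrix.vecMul_smul,
      Matrix.vecMul_one, Matrix.charpoly]
  have h2 := congrFun h i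
  have e (j : Fin N) : resolventRow A a j * charmatrix A j i
      = (if j = i then X * resolventRow A a i else 0) - C (A j i) * resolventRow A a j := by
    rw [charmatrix_apply, Matrix.diagonal_apply]
    split_ifs with hji
    · subst hji; ring
    · ring
  simp only [Matrix.vecMul, dotProduct, e, Finset.sum_sub_distrib, Finset.sum_ite_eq',
    Finset.mem_univ, if_true, Pi.smul_apply, smul_eq_mul] at h2
  linear_combination h2

/-- The `m`-th Taylor coefficient in `w` of `exp (x w − w² / 2) aᵀ adj (wI − A)`. -/
noncomputable def hermRow {N : ℕ} (m : ℕ) (A : Matrix (Fin N) (Fin N) ℂ) (a : Fin N → ℂ) (x : ℝ) :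
    Fin N → ℂ :=
  fun i => (hermL m (resolventRow A a i)).eval (x : ℂ)

/-- The `m`-th Taylor coefficient in `w` of `exp (x w − w² / 2) det (wI − A)`. -/
noncomputable def hermDet {N : ℕ} (m : ℕ) (A : Matrix (Fin N) (Fin N) ℂ) (x : ℝ) : ℂ :=
  (hermL m A.charpoly).eval (x : ℂ)

/-- The linear differential equation `α' = δ a + Aᵀ α` satisfied by the row of Taylor
coefficients. -/
lemma hasDerivAt_hermRow {N : ℕ} (m : ℕ) (A : Matrix (Fin N) (Fin N) ℂ) (a : Fin N → ℂ) (x : ℝ)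
    (i : Fin N) :
    HasDerivAt (fun x => hermRow m A a x i)
      ((hermDet m A x • a + hermRow m A a x ᵥ* A) i) x := by
  have h := ((hermL m (resolventRow A a i)).hasDerivAt (x : ℂ)).comp_ofReal
  convert! h using 1
  rw [derivative_hermL, X_mul_resolventRow, map_add, map_sum, hermL_C_mul]
  simp only [hermL_C_mul, hermRow, hermDet, eval_add, eval_mul, eval_C, eval_finsetSum,
    Pi.add_apply, Pi.smul_apply, smul_eq_mul, Matrix.vecMul, dotProduct]
  rw [mul_comm]
  congr 1
  exact Finset.sum_congr rfl fun j _ => mul_comm _ _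

lemma taylorCoeff_row {N : ℕ} (m : ℕ) (A : Matrix (Fin N) (Fin N) ℂ) (a v : Fin N → ℂ) (x : ℝ) :
    taylorCoeff m (fun w => hermGen x w *
      (A.charpoly.eval w + (fun i => (resolventRow A a i).eval w) ⬝ᵥ v))
      = hermDet m A x + hermRow m A a x ⬝ᵥ v := by
  have e : (fun w => hermGen x w *
      (A.charpoly.eval w + (fun i => (resolventRow A a i).eval w) ⬝ᵥ v))
      = fun w => hermGen x w * (A.charpoly + ∑ i, C (v i) * resolventRow A a i).eval w := by
    funext w
    simp [dotProduct, eval_finsetSum, mul_comm]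
  rw [e, taylorCoeff_hermGen_mul, map_add, map_sum]
  simp only [hermL_C_mul, dotProduct, eval_add, eval_finsetSum, eval_mul, eval_C, hermDet, hermRow]
  exact congrArg _ (Finset.sum_congr rfl fun i _ => mul_comm _ _)

/-- The `(n, n)` Taylor coefficient of `exp (x w − w² / 2 + x z − z² / 2)` times both sides of the
hypothesis `hc`. -/
lemma coefficient_identity {N : ℕ} (X Z : Matrix (Fin N) (Fin N) ℂ) (a b : Fin N → ℂ) (c : ℕ → ℂ)
    (hc : ∀ w z : ℂ,
      (w • (1 : Matrix (Fin N) (Fin N) ℂ) - X).det * (z • (1 : Matrix (Fin N) (Fin N) ℂ) - Z).det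
        + a ⬝ᵥ ((w • (1 : Matrix (Fin N) (Fin N) ℂ) - X).adjugate
            * (z • (1 : Matrix (Fin N) (Fin N) ℂ) - Z).adjugate).mulVec b
      = ∑ k ∈ Finset.range (N + 1), c k * (w * z) ^ k) (n : ℕ) (x : ℝ) :
    hermDet n X x * hermDet n Z x + hermRow n X a x ⬝ᵥ hermRow n Zᵀ b x
      = ∑ k ∈ Finset.range (min n N + 1), c k * ((hermCoeff (n - k)).eval (x : ℂ)) ^ 2 := by
  have hc' (w z : ℂ) : X.charpoly.eval w * Z.charpoly.eval z
      + ∑ i, (resolventRow X a i).eval w * (resolventRow Zᵀ b i).eval z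
      = ∑ k ∈ Finset.range (N + 1), c k * (w * z) ^ k := by
    rw [← hc w z, eval_charpoly', eval_charpoly', ← Matrix.mulVec_mulVec,
      Matrix.dotProduct_mulVec, ← eval_resolventRow, ← eval_resolventRow_transpose]
    rfl
  -- For fixed `z`, `hc` is an identity of polynomials in `w`, to which `hermL n` applies.
  have h1 (z : ℂ) : C (Z.charpoly.eval z) * X.charpoly
      + ∑ i, C ((resolventRow Zᵀ b i).eval z) * resolventRow X a i
      = ∑ k ∈ Finset.range (N + 1), C (c k * z ^ k) * Polynomial.X ^ k := by
    refine Polynomial.funext fun w => ?_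
    simp only [eval_add, eval_mul, eval_C, eval_finsetSum, eval_pow, eval_X]
    rw [mul_comm, Finset.sum_congr rfl fun i _ => mul_comm _ _, hc']
    exact Finset.sum_congr rfl fun k _ => by ring
  -- The result holds for all `z`, so it is an identity of polynomials in `z`.
  have h2 : C (hermDet n X x) * Z.charpoly
      + ∑ i, C (hermRow n X a x i) * resolventRow Zᵀ b i
      = ∑ k ∈ Finset.range (N + 1),
          C (c k * (hermL n (Polynomial.X ^ k)).eval (x : ℂ)) * Polynomial.X ^ k := by
    refine Polynomial.funext fun z => ?_
    have := congrArg (fun q => (hermL n q).eval (x : ℂ)) (h1 z)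
    simp only [map_add, map_sum, hermL_C_mul, eval_add, eval_mul, eval_C, eval_finsetSum] at this
    simp only [eval_add, eval_mul, eval_C, eval_finsetSum, eval_pow, eval_X]
    rw [mul_comm, Finset.sum_congr rfl fun i _ => mul_comm _ _]
    refine this.trans (Finset.sum_congr rfl fun k _ => by ring)
  have h3 := congrArg (fun q => (hermL n q).eval (x : ℂ)) h2
  simp only [map_add, map_sum, hermL_C_mul, eval_add, eval_mul, eval_C, eval_finsetSum] at h3
  refine Eq.trans h3 ?_
  have hsub : Finset.range (min n N + 1) ⊆ Finset.range (N + 1) := by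
    intro k; simp only [Finset.mem_range]; omega
  rw [← Finset.sum_subset hsub]
  · refine Finset.sum_congr rfl fun k hk => ?_
    rw [hermL_X_pow, if_pos (by simp only [Finset.mem_range] at hk; omega)]
    ring
  · intro k hk hk'
    rw [hermL_X_pow, if_neg (by simp only [Finset.mem_range] at hk hk'; omega)]
    simp

/-- With `G = (xI − X − Z)⁻¹`, the rank-one condition turns the derivative of
`exp (−x² / 2) αᵀ G β`, divided by the Gaussian, into `f g − (δ ε + αᵀ β)`. The left side is that
derivative, with `α' = δ a + Xᵀ α`, `β' = ε b + Z β` and `G' = −G²` inserted. -/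
lemma exactness_identity {N : ℕ} (X Z G : Matrix (Fin N) (Fin N) ℂ) (a b α β : Fin N → ℂ)
    (hrank : X * Z - Z * X - 1 = Matrix.vecMulVec b a) (x δ ε : ℂ)
    (hG : G * (x • (1 : Matrix (Fin N) (Fin N) ℂ) - X - Z) = 1) :
    (δ • a + α ᵥ* X) ⬝ᵥ (G *ᵥ β) - α ⬝ᵥ ((G * G) *ᵥ β) + α ⬝ᵥ (G *ᵥ (ε • b + Z *ᵥ β))
        - x * (α ⬝ᵥ (G *ᵥ β))
      = (δ + α ⬝ᵥ (G *ᵥ b)) * (ε + a ⬝ᵥ (G *ᵥ β)) - (δ * ε + α ⬝ᵥ β) := by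
  have hG' : (x • (1 : Matrix (Fin N) (Fin N) ℂ) - X - Z) * G = 1 := mul_eq_one_comm.mp hG
  have key : X * G + G * Z - x • G = -1 + G * G + G * Matrix.vecMulVec b a * G := by
    have e1 : X * G = x • G - Z * G - 1 := by
      rw [← hG']; simp only [sub_mul, smul_mul_assoc, one_mul]; abel
    have e2 : G * X = x • G - G * Z - 1 := by
      rw [← hG]; simp only [mul_sub, mul_smul_comm, mul_one]; abel
    -- `Z` is sandwiched between two copies of `G`, so `e1` and `e2` remove every `X`.
    have e3 : G * Matrix.vecMulVec b a * G = (G * X) * (Z * G) - (G * Z) * (X * G) - G * G := by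
      rw [← hrank]; noncomm_ring
    rw [e3, e1, e2]
    simp only [mul_sub, sub_mul, smul_mul_assoc, mul_smul_comm, mul_one, one_mul, mul_assoc]
    abel
  have h := congrArg (fun M : Matrix (Fin N) (Fin N) ℂ => α ⬝ᵥ (M *ᵥ β)) key
  have hr : α ⬝ᵥ ((G * Matrix.vecMulVec b a * G) *ᵥ β) = (α ⬝ᵥ (G *ᵥ b)) * (a ⬝ᵥ (G *ᵥ β)) := by
    rw [← Matrix.mulVec_mulVec, ← Matrix.mulVec_mulVec, Matrix.vecMulVec_mulVec,
      Matrix.mulVec_smul, dotProduct_smul]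
    simp
  simp only [Matrix.add_mulVec, Matrix.sub_mulVec, dotProduct_add, dotProduct_sub,
    Matrix.neg_mulVec, dotProduct_neg, Matrix.one_mulVec, hr, Matrix.smul_mulVec,
    dotProduct_smul, smul_eq_mul] at h
  simp only [← Matrix.mulVec_mulVec] at h
  simp only [add_dotProduct, smul_dotProduct, smul_eq_mul, ← Matrix.dotProduct_mulVec,
    Matrix.mulVec_add, Matrix.mulVec_smul, dotProduct_add, dotProduct_smul,
    ← Matrix.mulVec_mulVec]
  linear_combination h

/-! ### Polynomial growth and Gaussian integrals -/

/-- A continuous function on the real line whose norm is bounded by a polynomial. -/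
def PolyGrowth (φ : ℝ → ℂ) : Prop :=
  Continuous φ ∧ ∃ P : ℝ[X], ∀ x, ‖φ x‖ ≤ P.eval x

lemma PolyGrowth.add {φ ψ : ℝ → ℂ} (hφ : PolyGrowth φ) (hψ : PolyGrowth ψ) :
    PolyGrowth (fun x => φ x + ψ x) := by
  obtain ⟨h1, P, hP⟩ := hφ
  obtain ⟨h2, Q, hQ⟩ := hψ
  exact ⟨h1.add h2, P + Q, fun x => by
    rw [eval_add]; exact (norm_add_le _ _).trans (add_le_add (hP x) (hQ x))⟩

lemma PolyGrowth.mul {φ ψ : ℝ → ℂ} (hφ : PolyGrowth φ) (hψ : PolyGrowth ψ) :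
    PolyGrowth (fun x => φ x * ψ x) := by
  obtain ⟨h1, P, hP⟩ := hφ
  obtain ⟨h2, Q, hQ⟩ := hψ
  refine ⟨h1.mul h2, P * Q, fun x => ?_⟩
  rw [eval_mul, norm_mul]
  exact mul_le_mul (hP x) (hQ x) (norm_nonneg _) ((norm_nonneg _).trans (hP x))

lemma PolyGrowth.const (c : ℂ) : PolyGrowth (fun _ => c) :=
  ⟨continuous_const, C ‖c‖, fun x => by simp⟩

lemma PolyGrowth.sum {ι : Type*} (s : Finset ι) {φ : ι → ℝ → ℂ} (h : ∀ i, PolyGrowth (φ i)) :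
    PolyGrowth (fun x => ∑ i ∈ s, φ i x) := by
  classical
  induction s using Finset.induction_on with
  | empty => simpa using PolyGrowth.const 0
  | insert i s hi ih => simpa [Finset.sum_insert hi] using (h i).add ih

lemma PolyGrowth.ofReal : PolyGrowth (fun x => (x : ℂ)) :=
  ⟨Complex.continuous_ofReal, 1 + X ^ 2, fun x => by
    simp only [Complex.norm_real, Real.norm_eq_abs, eval_add, eval_one, eval_pow, eval_X]
    rw [← sq_abs]
    nlinarith [sq_nonneg (|x| - 1), abs_nonneg x]⟩

lemma PolyGrowth.sub {φ ψ : ℝ → ℂ} (hφ : PolyGrowth φ) (hψ : PolyGrowth ψ) :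
    PolyGrowth (fun x => φ x - ψ x) := by
  simpa [sub_eq_add_neg] using hφ.add ((PolyGrowth.const (-1)).mul hψ)

lemma PolyGrowth.eval (q : ℂ[X]) : PolyGrowth (fun x => q.eval (x : ℂ)) := by
  induction q using Polynomial.induction_on with
  | C c => simpa using PolyGrowth.const c
  | add p q hp hq => simpa using hp.add hq
  | monomial k c ih => simpa [pow_succ, ← mul_assoc] using ih.mul PolyGrowth.ofReal

lemma PolyGrowth.dotProduct {N : ℕ} {u v : ℝ → Fin N → ℂ} (hu : ∀ i, PolyGrowth fun x => u x i)
    (hv : ∀ i, PolyGrowth fun x => v x i) : PolyGrowth (fun x => u x ⬝ᵥ v x) :=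
  PolyGrowth.sum _ fun i => (hu i).mul (hv i)

lemma integrable_pow_mul_gaussian (k : ℕ) :
    Integrable fun x : ℝ => x ^ k * Real.exp (-x ^ 2 / 2) := by
  have := integrable_rpow_mul_exp_neg_mul_sq (b := 1 / 2) (by norm_num) (s := (k : ℝ))
    (by have : (0 : ℝ) ≤ k := k.cast_nonneg
        linarith)
  convert! this using 3 with x
  · rw [Real.rpow_natCast]
  · ring_nf

lemma integrable_poly_mul_gaussian (P : ℝ[X]) :
    Integrable fun x : ℝ => P.eval x * Real.exp (-x ^ 2 / 2) := by
  induction P using Polynomial.induction_on' with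
  | add p q hp hq => simp only [eval_add, add_mul]; exact hp.add hq
  | monomial k c => simpa [mul_assoc] using (integrable_pow_mul_gaussian k).const_mul c

lemma PolyGrowth.integrable {φ : ℝ → ℂ} (hφ : PolyGrowth φ) :
    Integrable fun x : ℝ => φ x * Complex.exp (-(x : ℂ) ^ 2 / 2) := by
  obtain ⟨hc, P, hP⟩ := hφ
  refine (integrable_poly_mul_gaussian P).mono' (by fun_prop) (Eventually.of_forall fun x => ?_)
  have : ‖Complex.exp (-(x : ℂ) ^ 2 / 2)‖ = Real.exp (-x ^ 2 / 2) := by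
    rw [Complex.norm_exp]; congr 1
    have : (-(x : ℂ) ^ 2 / 2) = ((-x ^ 2 / 2 : ℝ) : ℂ) := by push_cast; rfl
    rw [this, Complex.ofReal_re]
  rw [norm_mul, this]
  exact mul_le_mul_of_nonneg_right (hP x) (Real.exp_pos _).le

lemma hasDerivAt_gaussian (x : ℝ) :
    HasDerivAt (fun x : ℝ => Complex.exp (-(x : ℂ) ^ 2 / 2))
      (-(x : ℂ) * Complex.exp (-(x : ℂ) ^ 2 / 2)) x := by
  have h : HasDerivAt (fun z : ℂ => -z ^ 2 / 2) (-(x : ℂ)) x := by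
    have := ((hasDerivAt_id (x : ℂ)).pow 2).neg.div_const 2
    convert! this using 1
    simp; ring
  have := h.cexp.comp_ofReal
  rwa [mul_comm] at this

/-- The integrand is the derivative of `r x * exp (−x² / 2)`. -/
lemma integral_gaussian_exact_s16 {r r' : ℝ → ℂ} (hr : PolyGrowth r) (hr' : PolyGrowth r')
    (hd : ∀ x, HasDerivAt r (r' x) x) :
    ∫ x : ℝ, (r' x - x * r x) * Complex.exp (-(x : ℂ) ^ 2 / 2) = 0 := by
  refine integral_eq_zero_of_hasDerivAt_of_integrable (fun x => ?_)
    (hr'.sub (PolyGrowth.ofReal.mul hr)).integrable hr.integrable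
  have := (hd x).fun_mul (hasDerivAt_gaussian x)
  convert! this using 1
  ring

/-- The norms of the normalized Hermite polynomials. -/
lemma integral_hermCoeff_sq (k : ℕ) :
    ∫ x : ℝ, ((hermCoeff k).eval (x : ℂ)) ^ 2 * Complex.exp (-(x : ℂ) ^ 2 / 2)
      = (Real.sqrt (2 * Real.pi) : ℂ) / (k.factorial : ℂ) := by
  have hI (q : ℂ[X]) := (PolyGrowth.eval q).integrable
  induction k with
  | zero =>
    have h := integral_gaussian (1 / 2)
    have e : ∀ x : ℝ, ((hermCoeff 0).eval (x : ℂ)) ^ 2 * Complex.exp (-(x : ℂ) ^ 2 / 2)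
        = ((Real.exp (-(1 / 2) * x ^ 2) : ℝ) : ℂ) := by
      intro x
      simp only [hermCoeff, eval_one, one_pow, one_mul]
      push_cast; congr 1; ring
    simp_rw [e]
    rw [integral_complex_ofReal, h]
    rw [Nat.factorial_zero, Nat.cast_one, div_one, div_div_eq_mul_div, div_one, mul_comm]
  | succ j ih =>
    -- The derivative of `h_{j+1} h_j exp (−x² / 2)` is `(h_j² − (j + 1) h_{j+1}²) exp (−x² / 2)`.
    have hd (x : ℝ) := ((hermCoeff (j + 1) * hermCoeff j).hasDerivAt (x : ℂ)).comp_ofReal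
    have h0 := integral_gaussian_exact_s16 (PolyGrowth.eval _) (PolyGrowth.eval _) hd
    have e (x : ℝ) : ((derivative (hermCoeff (j + 1) * hermCoeff j)).eval (x : ℂ)
          - x * (hermCoeff (j + 1) * hermCoeff j).eval (x : ℂ)) * Complex.exp (-(x : ℂ) ^ 2 / 2)
        = (hermCoeff j).eval (x : ℂ) ^ 2 * Complex.exp (-(x : ℂ) ^ 2 / 2)
          - ((j : ℂ) + 1) * ((hermCoeff (j + 1)).eval (x : ℂ) ^ 2
            * Complex.exp (-(x : ℂ) ^ 2 / 2)) := by
      have h2 := congrArg (Polynomial.eval (x : ℂ)) (hermCoeff_succ j)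
      simp only [eval_mul, eval_C, eval_sub, eval_X] at h2
      rw [derivative_mul, derivative_hermCoeff_succ]
      simp only [eval_mul, eval_add]
      linear_combination ((hermCoeff (j + 1)).eval (x : ℂ) * Complex.exp (-(x : ℂ) ^ 2 / 2)) * h2
    simp_rw [e] at h0
    have hJ (i : ℕ) : Integrable fun x : ℝ => (hermCoeff i).eval (x : ℂ) ^ 2
        * Complex.exp (-(x : ℂ) ^ 2 / 2) := 
      (hI (hermCoeff i ^ 2)).congr (Eventually.of_forall fun x => by simp only [eval_pow])
    rw [integral_sub (hJ j) ((hJ (j + 1)).const_mul _), integral_const_mul, ih] at h0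
    have h : (j : ℂ) + 1 ≠ 0 := Nat.cast_add_one_ne_zero j
    have h' : (j.factorial : ℂ) ≠ 0 := Nat.cast_ne_zero.mpr j.factorial_ne_zero
    rw [Nat.factorial_succ]
    push_cast
    rw [mul_comm ((j : ℂ) + 1), ← div_div, eq_div_iff h]
    linear_combination -h0

/-! ### The inverse of `xI − X − Z` -/

section Inverse

variable {N : ℕ} (X Z : Matrix (Fin N) (Fin N) ℂ)

/-- The entries of `(xI − X − Z)⁻¹` are polynomials divided by the characteristic polynomial of
`X + Z`, which is bounded away from zero on the real line. -/
lemma polyGrowth_inv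
    (hXZ : ∀ x : ℝ, IsUnit ((x : ℂ) • (1 : Matrix (Fin N) (Fin N) ℂ) - X - Z)) (i j : Fin N) :
    PolyGrowth fun x : ℝ => ((x : ℂ) • (1 : Matrix (Fin N) (Fin N) ℂ) - X - Z)⁻¹ i j := by
  have hdet (x : ℝ) : (X + Z).charpoly.eval (x : ℂ) ≠ 0 := by
    rw [eval_charpoly', ← sub_sub]
    exact ((Matrix.isUnit_iff_isUnit_det _).mp (hXZ x)).ne_zero
  have e (x : ℝ) : ((x : ℂ) • (1 : Matrix (Fin N) (Fin N) ℂ) - X - Z)⁻¹ i j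
      = ((X + Z).charpoly.eval (x : ℂ))⁻¹ * ((charmatrix (X + Z)).adjugate i j).eval (x : ℂ) := by
    rw [Matrix.inv_def, sub_sub, ← eval_adjugate_charmatrix, ← eval_charpoly',
      Ring.inverse_eq_inv']
    rfl
  simp_rw [e]
  refine PolyGrowth.mul ?_ (PolyGrowth.eval _)
  have hcont : Continuous fun x : ℝ => (X + Z).charpoly.eval (x : ℂ) := (PolyGrowth.eval _).1
  have hN : 0 < N := i.pos
  have hdeg : 0 < (X + Z).charpoly.degree := by
    rw [Matrix.charpoly_degree_eq_dim]; simpa using hN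
  have hlim : Tendsto (fun x : ℝ => ‖(X + Z).charpoly.eval (x : ℂ)‖) (cocompact ℝ) atTop :=
    Polynomial.tendsto_norm_atTop _ hdeg (by simpa only [Complex.norm_real] using tendsto_norm_cocompact_atTop (E := ℝ))
  obtain ⟨x₀, hx₀⟩ := hcont.norm.exists_forall_le hlim
  refine ⟨hcont.inv₀ hdet, C ‖((X + Z).charpoly.eval (x₀ : ℂ))⁻¹‖, fun x => ?_⟩
  rw [eval_C, norm_inv, norm_inv]
  exact inv_anti₀ (norm_pos_iff.mpr (hdet x₀)) (hx₀ x)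

lemma hasDerivAt_inv_entry
    (hXZ : ∀ x : ℝ, IsUnit ((x : ℂ) • (1 : Matrix (Fin N) (Fin N) ℂ) - X - Z)) (i j : Fin N)
    (x : ℝ) :
    HasDerivAt (fun x : ℝ => ((x : ℂ) • (1 : Matrix (Fin N) (Fin N) ℂ) - X - Z)⁻¹ i j)
      (-((((x : ℂ) • (1 : Matrix (Fin N) (Fin N) ℂ) - X - Z)⁻¹
        * ((x : ℂ) • (1 : Matrix (Fin N) (Fin N) ℂ) - X - Z)⁻¹) i j)) x := by
  set M : ℝ → Matrix (Fin N) (Fin N) ℂ := fun x => (x : ℂ) • 1 - X - Z with hM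
  have hdet (x : ℝ) : IsUnit (M x).det := (Matrix.isUnit_iff_isUnit_det _).mp (hXZ x)
  -- By the resolvent identity the slope between `x` and `y` is `−M(y)⁻¹ M(x)⁻¹`.
  rw [hasDerivAt_iff_tendsto_slope]
  have hlim : Tendsto (fun y => -(((M y)⁻¹ * (M x)⁻¹) i j)) (𝓝[≠] x)
      (𝓝 (-(((M x)⁻¹ * (M x)⁻¹) i j))) := by
    refine (Continuous.tendsto ?_ x).mono_left nhdsWithin_le_nhds
    refine Continuous.neg ?_
    simp only [Matrix.mul_apply]
    exact continuous_finsetSum _ fun k _ => (polyGrowth_inv X Z hXZ i k).1.mul continuous_const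
  refine hlim.congr' ?_
  filter_upwards [self_mem_nhdsWithin] with y hy
  have hyx : ((y : ℂ) - x) ≠ 0 := by
    rw [sub_ne_zero]; exact_mod_cast hy
  have h : (M y)⁻¹ - (M x)⁻¹ = -(((y : ℂ) - x) • ((M y)⁻¹ * (M x)⁻¹)) := by
    have e : M x - M y = -(((y : ℂ) - x) • (1 : Matrix (Fin N) (Fin N) ℂ)) := by
      simp only [hM, sub_smul]; abel
    calc (M y)⁻¹ - (M x)⁻¹ = (M y)⁻¹ * (M x - M y) * (M x)⁻¹ := by
          rw [mul_sub, sub_mul, mul_assoc, Matrix.mul_nonsing_inv _ (hdet x),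
            Matrix.nonsing_inv_mul _ (hdet y), mul_one, one_mul]
      _ = _ := by rw [e]; simp
  have h' := congrFun (congrFun h i) j
  simp only [Matrix.sub_apply, Matrix.neg_apply, Matrix.smul_apply, smul_eq_mul] at h'
  rw [slope_def_module, h']
  rw [Complex.real_smul]
  push_cast
  field_simp

end Inverse

/-! ### The norms -/

lemma hasDerivAt_bilinear {N : ℕ} {u v : ℝ → Fin N → ℂ} {G : ℝ → Matrix (Fin N) (Fin N) ℂ}
    {u' v' : Fin N → ℂ} {G' : Matrix (Fin N) (Fin N) ℂ} {x : ℝ}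
    (hu : ∀ i, HasDerivAt (fun x => u x i) (u' i) x)
    (hv : ∀ i, HasDerivAt (fun x => v x i) (v' i) x)
    (hG : ∀ i j, HasDerivAt (fun x => G x i j) (G' i j) x) :
    HasDerivAt (fun x => u x ⬝ᵥ (G x *ᵥ v x))
      (u' ⬝ᵥ (G x *ᵥ v x) + u x ⬝ᵥ (G' *ᵥ v x) + u x ⬝ᵥ (G x *ᵥ v')) x := by
  have h := HasDerivAt.fun_sum (u := Finset.univ) fun i _ =>
    (hu i).fun_mul (HasDerivAt.fun_sum (u := Finset.univ) fun j _ => (hG i j).fun_mul (hv j))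
  convert! h using 1
  simp only [dotProduct, Matrix.mulVec, Finset.sum_add_distrib, mul_add]
  ring

/-- The norms: in the Exceptional Hermite situation (doubly-normalized wave function at
second time `0` depending only on `wz`), the diagonal Hermite products equal
`√(2π)·Σ_{k=0}^{min(n,N)} c_k/(n−k)!`, i.e. `√(2π)` times the Taylor coefficients of the
doubly-normalized wave function evaluated at first time `1` and second time `0`. -/
theorem norms_generating_function {N : ℕ} (hN : 0 < N)
    (X Z : Matrix (Fin N) (Fin N) ℂ) (a b : Fin N → ℂ)
    (hrank : X * Z - Z * X - 1 = Matrix.vecMulVec b a)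
    (hXZ : ∀ x : ℝ, IsUnit ((x : ℂ) • (1 : Matrix (Fin N) (Fin N) ℂ) - X - Z))
    (c : ℕ → ℂ)
    (hc : ∀ w z : ℂ,
      (w • (1 : Matrix (Fin N) (Fin N) ℂ) - X).det * (z • (1 : Matrix (Fin N) (Fin N) ℂ) - Z).det
        + a ⬝ᵥ ((w • (1 : Matrix (Fin N) (Fin N) ℂ) - X).adjugate
            * (z • (1 : Matrix (Fin N) (Fin N) ℂ) - Z).adjugate).mulVec b
      = ∑ k ∈ Finset.range (N + 1), c k * (w * z) ^ k)
    (f g : ℕ → ℝ → ℂ)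
    (hf : ∀ (m : ℕ) (x : ℝ), f m x = (1 / (m.factorial : ℂ)) *
      iteratedDeriv m (fun w : ℂ => Complex.exp ((x : ℂ) * w - w ^ 2 / 2) *
        ((w • (1 : Matrix (Fin N) (Fin N) ℂ) - X).det
          + a ⬝ᵥ ((w • (1 : Matrix (Fin N) (Fin N) ℂ) - X).adjugate
              * ((x : ℂ) • 1 - X - Z)⁻¹).mulVec b)) 0)
    (hg : ∀ (n : ℕ) (x : ℝ), g n x = (1 / (n.factorial : ℂ)) *
      iteratedDeriv n (fun z : ℂ => Complex.exp ((x : ℂ) * z - z ^ 2 / 2) *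
        ((z • (1 : Matrix (Fin N) (Fin N) ℂ) - Z).det
          + a ⬝ᵥ (((x : ℂ) • (1 : Matrix (Fin N) (Fin N) ℂ) - X - Z)⁻¹
              * (z • 1 - Z).adjugate).mulVec b)) 0)
    (n : ℕ) :
    ∫ x : ℝ, f n x * g n x * Complex.exp (-(x : ℂ) ^ 2 / 2)
      = (Real.sqrt (2 * Real.pi) : ℂ) *
          ∑ k ∈ Finset.range (min n N + 1), c k / ((n - k).factorial : ℂ) := by
  set G : ℝ → Matrix (Fin N) (Fin N) ℂ :=
    fun x => ((x : ℂ) • (1 : Matrix (Fin N) (Fin N) ℂ) - X - Z)⁻¹ with hGdef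
  set α := hermRow n X a with hα
  set β := hermRow n Zᵀ b with hβ
  have hfx (x : ℝ) : f n x = hermDet n X x + α x ⬝ᵥ (G x *ᵥ b) := by
    rw [hα, ← taylorCoeff_row, hf]
    simp only [eval_charpoly', eval_resolventRow, ← Matrix.dotProduct_mulVec, Matrix.mulVec_mulVec]
    rfl
  have hgx (x : ℝ) : g n x = hermDet n Z x + a ⬝ᵥ (G x *ᵥ β x) := by
    have hdet : hermDet n Z x = hermDet n Zᵀ x := by
      simp only [hermDet, Matrix.charpoly_transpose]
    rw [Matrix.dotProduct_mulVec, dotProduct_comm, hβ, hdet, ← taylorCoeff_row, hg]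
    simp only [Matrix.charpoly_transpose, eval_charpoly', eval_resolventRow_transpose,
      dotProduct_comm _ (a ᵥ* G x), ← Matrix.dotProduct_mulVec, Matrix.mulVec_mulVec]
    rfl
  have hGgrow (i j : Fin N) : PolyGrowth fun x => G x i j := polyGrowth_inv X Z hXZ i j
  have hαgrow (i : Fin N) : PolyGrowth fun x => α x i := PolyGrowth.eval _
  have hβgrow (i : Fin N) : PolyGrowth fun x => β x i := PolyGrowth.eval _
  have hGβ (i : Fin N) : PolyGrowth fun x => (G x *ᵥ β x) i :=
    PolyGrowth.dotProduct (hGgrow i) hβgrow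
  have hr : PolyGrowth fun x => α x ⬝ᵥ (G x *ᵥ β x) := PolyGrowth.dotProduct hαgrow hGβ
  have hfgrow : PolyGrowth (f n) := by
    rw [show f n = _ from funext hfx]
    exact (PolyGrowth.eval _).add (PolyGrowth.dotProduct hαgrow fun i =>
      PolyGrowth.dotProduct (hGgrow i) fun j => PolyGrowth.const _)
  have hggrow : PolyGrowth (g n) := by
    rw [show g n = _ from funext hgx]
    exact (PolyGrowth.eval _).add (PolyGrowth.dotProduct (fun i => PolyGrowth.const _) hGβ)
  set K : ℝ → ℂ := fun x => hermDet n X x * hermDet n Z x + α x ⬝ᵥ β x with hK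
  have hKgrow : PolyGrowth K :=
    ((PolyGrowth.eval _).mul (PolyGrowth.eval _)).add (PolyGrowth.dotProduct hαgrow hβgrow)
  have hd (x : ℝ) : HasDerivAt (fun x => α x ⬝ᵥ (G x *ᵥ β x))
      ((f n x * g n x - K x) + x * (α x ⬝ᵥ (G x *ᵥ β x))) x := by
    have h := hasDerivAt_bilinear (hasDerivAt_hermRow n X a x) (hasDerivAt_hermRow n Zᵀ b x)
      (G := G) (G' := -(G x * G x)) (fun i j => hasDerivAt_inv_entry X Z hXZ i j x)
    have hG : G x * ((x : ℂ) • (1 : Matrix (Fin N) (Fin N) ℂ) - X - Z) = 1 :=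
      Matrix.nonsing_inv_mul _ ((Matrix.isUnit_iff_isUnit_det _).mp (hXZ x))
    have hex := exactness_identity X Z (G x) a b (α x) (β x) hrank x (hermDet n X x)
      (hermDet n Z x) hG
    convert! h using 1
    have hdet : hermDet n Zᵀ x = hermDet n Z x := by
      simp only [hermDet, Matrix.charpoly_transpose]
    rw [hfx, hgx, Matrix.vecMul_transpose, Matrix.neg_mulVec, dotProduct_neg, hdet]
    linear_combination -hex
  have h0 := integral_gaussian_exact_s16 hr
    (((hfgrow.mul hggrow).sub hKgrow).add (PolyGrowth.ofReal.mul hr)) hd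
  have hsplit : ∫ x : ℝ, f n x * g n x * Complex.exp (-(x : ℂ) ^ 2 / 2)
      = ∫ x : ℝ, K x * Complex.exp (-(x : ℂ) ^ 2 / 2) := by
    rw [← sub_eq_zero, ← integral_sub (hfgrow.mul hggrow).integrable hKgrow.integrable, ← h0]
    refine integral_congr_ae (Eventually.of_forall fun x => ?_)
    ring
  have hKx (x : ℝ) : K x * Complex.exp (-(x : ℂ) ^ 2 / 2)
      = ∑ k ∈ Finset.range (min n N + 1), c k * (((hermCoeff (n - k)).eval (x : ℂ)) ^ 2
          * Complex.exp (-(x : ℂ) ^ 2 / 2)) := by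
    rw [hK]
    simp only
    rw [coefficient_identity X Z a b c hc n x, Finset.sum_mul]
    exact Finset.sum_congr rfl fun k _ => mul_assoc _ _ _
  rw [hsplit]
  simp_rw [hKx]
  rw [integral_finsetSum, Finset.mul_sum]
  · refine Finset.sum_congr rfl fun k _ => ?_
    rw [integral_const_mul, integral_hermCoeff_sq]
    ring
  · intro k _
    exact ((PolyGrowth.eval (hermCoeff (n - k) ^ 2)).integrable.congr
      (Eventually.of_forall fun x => by simp only [eval_pow])).const_mul _
end
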